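/- (Theorem 1, D-bound without power constraint.) For every n ≥ 1, every random vector X in ℝⁿ with E[‖X‖²] < ∞, and all 0 < snr ≤ snr0, the MMSE satisfies mmse(X, snr) ≤ mmse(X, snr0) + (n+2)·(1/snr − 1/snr0). -/

import Mathlib

open MeasureTheory ProbabilityTheory Real

noncomputable section

/-- The observation `Y_snr = √snr · X + Z` as a random vector in `ℝⁿ` (modeled as `Fin n → ℝ`). -/
def obs {Ω : Type*} {n : ℕ} (X Z : Ω → Fin n → ℝ) (snr : ℝ) : Ω → Fin n → ℝ :=
  fun ω i => Real.sqrt snr * X ω i + Z ω i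

/-- The σ-algebra generated by the observation `Y_snr`. -/
def obsSigma {Ω : Type*} [MeasurableSpace Ω] {n : ℕ} (X Z : Ω → Fin n → ℝ) (snr : ℝ) :
    MeasurableSpace Ω :=
  MeasurableSpace.comap (obs X Z snr) inferInstance

/-- Componentwise conditional expectation of a random vector given a sub-σ-algebra `m`. -/
def ceVec {Ω : Type*} [MeasurableSpace Ω] {n : ℕ} (μ : Measure Ω) (m : MeasurableSpace Ω)
    (V : Ω → Fin n → ℝ) : Ω → Fin n → ℝ :=
  fun ω i => (μ[fun ω' => V ω' i | m]) ω

/-- `mmse(X, snr) = (1/n) · E[‖X − E[X | Y_snr]‖²]`. -/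
def mmseV {Ω : Type*} [MeasurableSpace Ω] {n : ℕ} (μ : Measure Ω) (X Z : Ω → Fin n → ℝ)
    (snr : ℝ) : ℝ :=
  (1 / (n : ℝ)) * ∫ ω, ∑ i, (X ω i - ceVec μ (obsSigma X Z snr) X ω i) ^ 2 ∂μ

/-!
Let `e(snr)` be the mean squared norm of `E[X | Y_snr]`. Up to the normalisation by `n`, the MMSE is
`E‖X‖² - e(snr)`, so the claim bounds the growth of `e`.

If `A² = a² + t²`, observing `X` at amplitude `A` amounts to observing it at amplitude `a`, and then
observing at amplitude `t`, through fresh noise, a signal whose law is the posterior given the first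
observation `y = a X + z`. Whatever the prior, this posterior has density proportional to
`exp(-a²‖x - y/a‖²/2)` with respect to it. It therefore has Gaussian tails around `y/a`, and for
`t` small compared with `a` the second observation raises the energy of the estimate by at most
`t² E[‖x - y/a‖⁴ exp(48 t² ‖x - y/a‖²)]`, an expectation over the posterior.

Averaged over `y`, the deviation `x - y/a` becomes the Gaussian vector `-z/a`. As
`E‖z‖⁴ = n (n + 2)`, the increment of `e` between `snr = a²` and `snr = A²` is at most
`n (n + 2) (1/a² - 1/A²) (1 + o(1))` as `t/a → 0`, with an error that depends on `t/a` only. Summing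
along a geometric sequence of ratio tending to `1` gives the bound.
-/

open Filter Module
open scoped ENNReal Topology RealInnerProductSpace

section GaussianReal

lemma integral_sq_gaussianReal : ∫ z, z ^ 2 ∂gaussianReal 0 1 = 1 := by
  have h := variance_id_gaussianReal (μ := 0) (v := 1)
  rw [variance_of_integral_eq_zero (by fun_prop) (by simp)] at h
  simpa using h

lemma integral_pow_four_gaussianReal : ∫ z, z ^ 4 ∂gaussianReal 0 1 = 3 := by
  let f (t : ℝ) : ℝ := t ^ (4 : ℝ) * exp (-(1 / 2) * t ^ (2 : ℝ))
  have h_abs (z : ℝ) : gaussianPDFReal 0 1 z • z ^ 4 = (√(2 * π))⁻¹ * f |z| := by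
    have h4 : |z| ^ (4 : ℝ) = z ^ 4 := by
      rw [rpow_ofNat, Even.pow_abs (by decide)]
    have h2 : |z| ^ (2 : ℝ) = z ^ 2 := by rw [rpow_ofNat, sq_abs]
    simp only [f, gaussianPDFReal, h4, h2, NNReal.coe_one, mul_one, sub_zero, smul_eq_mul]
    ring_nf
  have h_Gamma : Gamma ((4 + 1) / 2) = 3 * √π / 4 := by
    rw [show ((4 : ℝ) + 1) / 2 = ((2 : ℕ) : ℝ) + 1 / 2 by norm_num, Gamma_nat_add_half]
    norm_num [Nat.doubleFactorial]
  have h_pow : (1 / 2 : ℝ) ^ (-(4 + 1) / 2 : ℝ) = 4 * √2 := by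
    rw [one_div, inv_rpow two_pos.le, ← rpow_neg two_pos.le,
      show -(-((4 : ℝ) + 1) / 2) = 2 + 1 / 2 by norm_num, rpow_add two_pos, ← sqrt_eq_rpow]
    norm_num
  rw [integral_gaussianReal_eq_integral_smul one_ne_zero]
  simp_rw [h_abs]
  rw [integral_const_mul, integral_comp_abs (f := f),
    integral_rpow_mul_exp_neg_mul_rpow two_pos (by norm_num) (by norm_num), h_Gamma, h_pow,
    sqrt_mul two_pos.le]
  field_simp

lemma memLp_sq_gaussianReal : MemLp (fun z : ℝ => z ^ 2) 2 (gaussianReal 0 1) := by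
  rw [memLp_two_iff_integrable_sq (by fun_prop)]
  refine ((memLp_id_gaussianReal' ((4 : ℕ) : ℝ≥0∞) (by simp)).integrable_norm_pow
    four_ne_zero).congr (.of_forall fun z => ?_)
  simp only [id_eq, norm_eq_abs, Even.pow_abs (by decide : Even 4)]
  ring

lemma variance_sq_gaussianReal : Var[fun z => z ^ 2; gaussianReal 0 1] = 2 := by
  rw [variance_eq_sub memLp_sq_gaussianReal]
  simp only [Pi.pow_apply, ← pow_mul, Nat.reduceMul, integral_sq_gaussianReal,
    integral_pow_four_gaussianReal]
  norm_num

lemma integrable_exp_mul_sq_gaussianReal {c : ℝ} (hc : c < 1 / 2) :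
    Integrable (fun z => exp (c * z ^ 2)) (gaussianReal 0 1) := by
  rw [gaussianReal_of_var_ne_zero _ one_ne_zero, integrable_withDensity_iff (by fun_prop)
    (.of_forall fun _ => gaussianPDF_lt_top)]
  refine ((integrable_exp_neg_mul_sq (b := 1 / 2 - c) (by linarith)).const_mul
    (√(2 * π))⁻¹).congr (.of_forall fun z => ?_)
  simp only [toReal_gaussianPDF, gaussianPDFReal, NNReal.coe_one, mul_one]
  rw [mul_left_comm, ← exp_add]
  ring_nf

end GaussianReal

section StdGaussian

variable {E : Type*} [NormedAddCommGroup E] [InnerProductSpace ℝ E] [FiniteDimensional ℝ E]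
  [MeasurableSpace E] [BorelSpace E]

lemma map_norm_sq_stdGaussian :
    (stdGaussian E).map (fun z => ‖z‖ ^ 2) =
      (Measure.pi fun _ : Fin (finrank ℝ E) => gaussianReal 0 1).map fun u => ∑ i, u i ^ 2 := by
  rw [stdGaussian, Measure.map_map (by fun_prop) (by fun_prop)]
  congr 1 with u
  simp [← (stdOrthonormalBasis ℝ E).sum_sq_inner_right, inner_sum, real_inner_smul_right,
    orthonormal_iff_ite.1 (stdOrthonormalBasis ℝ E).orthonormal]

lemma integral_norm_pow_four_stdGaussian :
    ∫ z, ‖z‖ ^ 4 ∂stdGaussian E = finrank ℝ E * (finrank ℝ E + 2) := by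
  let γ : Measure (Fin (finrank ℝ E) → ℝ) := Measure.pi fun _ => gaussianReal 0 1
  have h_memLp (i : Fin (finrank ℝ E)) : MemLp (fun u => u i ^ 2) 2 γ :=
    memLp_sq_gaussianReal.comp_measurePreserving (measurePreserving_eval _ i)
  have h_sq (i : Fin (finrank ℝ E)) : ∫ u, u i ^ 2 ∂γ = 1 := by
    rw [← integral_sq_gaussianReal, ← (measurePreserving_eval (fun _ => gaussianReal 0 1) i).map_eq,
      integral_map (measurable_pi_apply i).aemeasurable (by fun_prop)]
  have h_mean : ∫ u, ∑ i, u i ^ 2 ∂γ = finrank ℝ E := by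
    rw [integral_finsetSum _ fun i _ => (h_memLp i).integrable one_le_two]
    simp [h_sq]
  have h_var : Var[fun u => ∑ i, u i ^ 2; γ] = finrank ℝ E * 2 := by
    have h := variance_sum_pi (ι := Fin (finrank ℝ E)) fun _ => memLp_sq_gaussianReal
    simp only [variance_sq_gaussianReal, Finset.sum_const, Finset.card_univ, Fintype.card_fin,
      nsmul_eq_mul] at h
    rw [← h]
    congr 1 with u
    simp
  calc ∫ z, ‖z‖ ^ 4 ∂stdGaussian E
      = ∫ r, r ^ 2 ∂(stdGaussian E).map fun z => ‖z‖ ^ 2 := by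
        rw [integral_map (by fun_prop) (by fun_prop)]
        simp_rw [← pow_mul]
    _ = ∫ u, (∑ i, u i ^ 2) ^ 2 ∂γ := by
        rw [map_norm_sq_stdGaussian,
          integral_map (Measurable.aemeasurable (by fun_prop)) (by fun_prop)]
    _ = finrank ℝ E * (finrank ℝ E + 2) := by
        rw [variance_eq_sub (memLp_finsetSum _ fun i _ => h_memLp i), h_mean] at h_var
        simp only [Pi.pow_apply] at h_var
        linarith

lemma integrable_exp_mul_norm_sq_stdGaussian {c : ℝ} (hc : c < 1 / 2) :
    Integrable (fun z => exp (c * ‖z‖ ^ 2)) (stdGaussian E) := by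
  change Integrable ((fun r => exp (c * r)) ∘ fun z : E => ‖z‖ ^ 2) _
  rw [← integrable_map_measure (by fun_prop) (by fun_prop), map_norm_sq_stdGaussian,
    integrable_map_measure (by fun_prop) (Measurable.aemeasurable (by fun_prop))]
  refine (Integrable.fintype_prod fun _ => integrable_exp_mul_sq_gaussianReal hc).congr
    (.of_forall fun u => ?_)
  simp [← exp_sum, Finset.mul_sum]

lemma integral_cexp_inner_add_inner_mul_I_stdGaussian (x t : E) :
    ∫ y, Complex.exp (⟪x, y⟫ + ⟪y, t⟫ * Complex.I) ∂stdGaussian E =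
      Complex.exp ((‖x‖ ^ 2 - ‖t‖ ^ 2) / 2 + ⟪x, t⟫ * Complex.I) := by
  let b := stdOrthonormalBasis ℝ E
  let w (i : Fin (finrank ℝ E)) : ℂ := ⟪x, b i⟫ + ⟪b i, t⟫ * Complex.I
  have h_coord (i : Fin (finrank ℝ E)) :
      ∫ u : ℝ, Complex.exp (w i * u) ∂gaussianReal 0 1 = Complex.exp (w i ^ 2 / 2) := by
    simpa [complexMGF] using complexMGF_id_gaussianReal (μ := 0) (v := 1) (w i)
  have h_sum : ∑ i, w i ^ 2 = ‖x‖ ^ 2 - ‖t‖ ^ 2 + 2 * ⟪x, t⟫ * Complex.I := by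
    have h (i : Fin (finrank ℝ E)) :
        w i ^ 2 = (⟪x, b i⟫ ^ 2 : ℝ) - (⟪b i, t⟫ ^ 2 : ℝ) +
          2 * (⟪x, b i⟫ * ⟪b i, t⟫ : ℝ) * Complex.I := by
      simp only [w]
      push_cast
      linear_combination (⟪b i, t⟫ : ℂ) ^ 2 * Complex.I_sq
    simp_rw [h, Finset.sum_add_distrib, Finset.sum_sub_distrib, ← Finset.sum_mul,
      ← Finset.mul_sum, ← Complex.ofReal_sum, b.sum_inner_mul_inner, b.sum_sq_inner_left,
      b.sum_sq_inner_right, Complex.ofReal_pow]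
  rw [stdGaussian_eq_map_pi_orthonormalBasis b,
    integral_map (Measurable.aemeasurable (by fun_prop)) (by fun_prop)]
  have h_prod (u : Fin (finrank ℝ E) → ℝ) :
      Complex.exp (⟪x, ∑ i, u i • b i⟫ + ⟪∑ i, u i • b i, t⟫ * Complex.I) =
        ∏ i, Complex.exp (w i * u i) := by
    rw [← Complex.exp_sum]
    simp only [w, inner_sum, sum_inner, real_inner_smul_left, real_inner_smul_right,
      Complex.ofReal_sum, Complex.ofReal_mul, Finset.sum_mul, ← Finset.sum_add_distrib]
    exact congrArg _ (Finset.sum_congr rfl fun i _ => by ring)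
  simp_rw [h_prod]
  rw [integral_fintype_prod_eq_prod (f := fun i (u : ℝ) => Complex.exp (w i * u))]
  simp_rw [h_coord, ← Complex.exp_sum, ← Finset.sum_div, h_sum]
  ring_nf

lemma integrable_exp_inner_stdGaussian (x : E) :
    Integrable (fun y => exp ⟪x, y⟫) (stdGaussian E) := by
  refine ((integrable_exp_mul_norm_sq_stdGaussian (c := 1 / 4) (by norm_num)).const_mul
    (exp (‖x‖ ^ 2))).mono' (by fun_prop) (.of_forall fun y => ?_)
  rw [norm_eq_abs, abs_exp, ← exp_add, exp_le_exp]
  nlinarith [real_inner_le_norm x y, sq_nonneg (‖x‖ - ‖y‖ / 2)]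

lemma integral_exp_inner_stdGaussian (x : E) :
    ∫ y, exp ⟪x, y⟫ ∂stdGaussian E = exp (‖x‖ ^ 2 / 2) := by
  have h := integral_cexp_inner_add_inner_mul_I_stdGaussian x 0
  simp only [inner_zero_right, Complex.ofReal_zero, zero_mul, add_zero, norm_zero, ne_eq,
    OfNat.ofNat_ne_zero, not_false_eq_true, zero_pow, sub_zero] at h
  exact_mod_cast h

lemma map_const_add_stdGaussian (x : E) :
    (stdGaussian E).map (x + ·) =
      (stdGaussian E).withDensity fun y => .ofReal (exp (⟪x, y⟫ - ‖x‖ ^ 2 / 2)) := by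
  have h_exp : Integrable (fun y => exp (⟪x, y⟫ - ‖x‖ ^ 2 / 2)) (stdGaussian E) := by
    simpa only [exp_sub] using (integrable_exp_inner_stdGaussian x).div_const _
  have := isFiniteMeasure_withDensity_ofReal h_exp.2
  have h_smul (t y : E) : exp (⟪x, y⟫ - ‖x‖ ^ 2 / 2) • Complex.exp (⟪y, t⟫ * Complex.I) =
      Complex.exp (-(‖x‖ ^ 2 / 2)) * Complex.exp (⟪x, y⟫ + ⟪y, t⟫ * Complex.I) := by
    rw [Complex.real_smul, Complex.ofReal_exp, ← Complex.exp_add, ← Complex.exp_add]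
    push_cast
    ring_nf
  refine Measure.ext_of_charFun (funext fun t => ?_)
  rw [charFun_map_const_add, charFun_stdGaussian, charFun_apply,
    integral_withDensity_eq_integral_toReal_smul (by fun_prop) (by simp)]
  simp_rw [ENNReal.toReal_ofReal (exp_pos _).le, h_smul]
  rw [integral_const_mul, integral_cexp_inner_add_inner_mul_I_stdGaussian, ← Complex.exp_add,
    ← Complex.exp_add]
  ring_nf

lemma map_smul_add_smul_prod_stdGaussian {a b : ℝ} (hab : a ^ 2 + b ^ 2 = 1) :
    ((stdGaussian E).prod (stdGaussian E)).map (fun p => a • p.1 + b • p.2) = stdGaussian E := by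
  have h_conv : ((stdGaussian E).prod (stdGaussian E)).map (fun p => a • p.1 + b • p.2) =
      (stdGaussian E).map (a • ·) ∗ (stdGaussian E).map (b • ·) := by
    rw [Measure.conv, Measure.map_prod_map _ _ (by fun_prop) (by fun_prop),
      Measure.map_map (by fun_prop) (by fun_prop)]
    rfl
  refine Measure.ext_of_charFun (funext fun t => ?_)
  rw [h_conv, charFun_conv, charFun_map_smul, charFun_map_smul]
  simp only [charFun_stdGaussian, ← Complex.exp_add, ← Complex.ofReal_pow, norm_smul, norm_eq_abs,
    mul_pow, sq_abs]
  have hab' : (a : ℂ) ^ 2 + (b : ℂ) ^ 2 = 1 := mod_cast hab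
  push_cast
  congr 1
  linear_combination -(‖t‖ : ℂ) ^ 2 / 2 * hab'

end StdGaussian

section ExponentialMoments

lemma mul_exp_mul_sub_self_le {s : ℝ} (hs : 0 ≤ s) (x : ℝ) :
    x * exp (s * x) - x ≤ s * (x ^ 2 * exp (s * |x|)) := by
  rcases le_total 0 x with hx | hx
  · have h : exp (s * x) * (1 - s * x) ≤ 1 := by
      rw [← le_div_iff₀' (exp_pos _), one_div, ← exp_neg]
      linarith [add_one_le_exp (-(s * x))]
    rw [abs_of_nonneg hx]
    nlinarith [mul_le_mul_of_nonneg_left h hx]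
  · have h : s * x ^ 2 ≤ s * (x ^ 2 * exp (s * |x|)) := by
      gcongr
      exact le_mul_of_one_le_right (sq_nonneg x) (one_le_exp (by positivity))
    nlinarith [mul_le_mul_of_nonpos_left (add_one_le_exp (s * x)) hx]

lemma mul_exp_sub_one_mono {c x y : ℝ} (hc : 0 ≤ c) (hx : 0 ≤ x) (hxy : x ≤ y) :
    x * (exp (c * x) - 1) ≤ y * (exp (c * y) - 1) := by
  have h : 0 ≤ exp (c * x) - 1 := sub_nonneg.2 (one_le_exp (mul_nonneg hc hx))
  gcongr
  exact hx.trans hxy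

lemma mul_exp_sub_one_le_of_le_two_mul_add {c x y z : ℝ} (hc : 0 ≤ c) (hx : 0 ≤ x) (hy : 0 ≤ y)
    (hz : 0 ≤ z) (hxyz : x ≤ 2 * y + 2 * z) :
    x * (exp (c * x) - 1) ≤ 4 * (y * (exp (4 * c * y) - 1)) + 4 * (z * (exp (4 * c * z) - 1)) := by
  have h_nonneg {u : ℝ} (hu : 0 ≤ u) : 0 ≤ u * (exp (4 * c * u) - 1) :=
    mul_nonneg hu (sub_nonneg.2 (one_le_exp (by positivity)))
  have h_le {u : ℝ} (h : x ≤ 4 * u) : x * (exp (c * x) - 1) ≤ 4 * (u * (exp (4 * c * u) - 1)) := by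
    have h' := mul_exp_sub_one_mono hc hx h
    rwa [mul_assoc, ← mul_assoc c, mul_comm c 4] at h'
  rcases le_total y z with h | h
  · linarith [h_le (show x ≤ 4 * z by linarith), h_nonneg hy]
  · linarith [h_le (show x ≤ 4 * y by linarith), h_nonneg hz]

lemma mul_exp_sub_one_le_exp_mul_sub_one (n : ℕ) (x : ℝ) :
    n * (exp x - 1) ≤ exp (n * x) - 1 := by
  have h := one_add_mul_le_pow (a := exp x - 1) (by linarith [exp_pos x]) n
  rw [add_sub_cancel, ← exp_nat_mul] at h
  linarith

lemma monovary_exp_mul_mul_exp {ι : Type*} {f : ι → ℝ} (hf0 : ∀ i, 0 ≤ f i) {a b : ℝ} (ha : 0 ≤ a)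
    (hb : 0 ≤ b) :
    Monovary (fun i => exp (a * f i)) fun i => f i * exp (b * f i) := by
  refine monovary_iff_forall_mul_nonneg.2 fun i j => ?_
  have := hf0 i
  have := hf0 j
  rcases le_total (f i) (f j) with h | h
  · exact mul_nonneg (sub_nonneg.2 (by gcongr)) (sub_nonneg.2 (by gcongr))
  · exact mul_nonneg_of_nonpos_of_nonpos (sub_nonpos.2 (by gcongr)) (sub_nonpos.2 (by gcongr))

variable {Ω : Type*} [MeasurableSpace Ω] {μ : Measure Ω} {f g : Ω → ℝ}

lemma integrable_pow_mul_exp_mul_of_lt (hf : AEMeasurable f μ) (hf0 : ∀ ω, 0 ≤ f ω) {c K : ℝ}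
    (hK : Integrable (fun ω => exp (K * f ω)) μ) (hc : c < K) (n : ℕ) :
    Integrable (fun ω => f ω ^ n * exp (c * f ω)) μ := by
  refine integrable_pow_mul_exp_of_integrable_exp_mul (sub_pos.2 hc).ne' ?_ ?_ n
  · simpa using hK
  · refine hK.mono' (by fun_prop) (.of_forall fun ω => ?_)
    rw [norm_eq_abs, abs_exp]
    have := hf0 ω
    gcongr
    linarith

variable [IsProbabilityMeasure μ]

lemma integral_mul_integral_le_of_monovary (hfg : Monovary f g) (hf : Integrable f μ)
    (hg : Integrable g μ) (hfg' : Integrable (fun ω => f ω * g ω) μ) :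
    (∫ ω, f ω ∂μ) * ∫ ω, g ω ∂μ ≤ ∫ ω, f ω * g ω ∂μ := by
  have h_nonneg : 0 ≤ ∫ p : Ω × Ω, (f p.1 - f p.2) * (g p.1 - g p.2) ∂μ.prod μ :=
    integral_nonneg fun p => monovary_iff_forall_mul_nonneg.1 hfg p.2 p.1
  have h_expand (p : Ω × Ω) : (f p.1 - f p.2) * (g p.1 - g p.2) =
      f p.1 * g p.1 + f p.2 * g p.2 - (f p.1 * g p.2 + g p.1 * f p.2) := by ring
  simp_rw [h_expand] at h_nonneg
  rw [integral_sub ((hfg'.comp_fst μ).fun_add (hfg'.comp_snd μ))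
      ((hf.mul_prod hg).fun_add (hg.mul_prod hf)),
    integral_add (hfg'.comp_fst μ) (hfg'.comp_snd μ),
    integral_add (hf.mul_prod hg) (hg.mul_prod hf), integral_prod_mul, integral_prod_mul,
    integral_fun_fst (fun ω => f ω * g ω), integral_fun_snd (fun ω => f ω * g ω)] at h_nonneg
  simp only [probReal_univ, one_smul] at h_nonneg
  linarith

lemma exp_integral_mul_integral_mul_exp_le (hf : AEMeasurable f μ) (hf0 : ∀ ω, 0 ≤ f ω)
    {a b K : ℝ} (ha : 0 ≤ a) (hb : 0 ≤ b) (hK : Integrable (fun ω => exp (K * f ω)) μ)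
    (hab : a + b < K) :
    exp (a * ∫ ω, f ω ∂μ) * ∫ ω, f ω * exp (b * f ω) ∂μ ≤
      ∫ ω, f ω * exp ((a + b) * f ω) ∂μ := by
  have h_int {c : ℝ} (hc : c < K) (n : ℕ) : Integrable (fun ω => f ω ^ n * exp (c * f ω)) μ :=
    integrable_pow_mul_exp_mul_of_lt hf hf0 hK hc n
  have h_exp : Integrable (fun ω => exp (a * f ω)) μ := by simpa using h_int (by linarith) 0
  have h_mul : Integrable (fun ω => f ω * exp (b * f ω)) μ := by simpa using h_int (by linarith) 1
  have h_split (ω : Ω) :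
      f ω * exp ((a + b) * f ω) = exp (a * f ω) * (f ω * exp (b * f ω)) := by
    rw [add_mul, exp_add]
    ring
  have h_jensen : exp (a * ∫ ω, f ω ∂μ) ≤ ∫ ω, exp (a * f ω) ∂μ := by
    rw [← integral_const_mul]
    exact convexOn_exp.map_integral_le continuous_exp.continuousOn isClosed_univ (by simp)
      ((by simpa using h_int (c := 0) (by linarith) 1 : Integrable f μ).const_mul a) h_exp
  calc exp (a * ∫ ω, f ω ∂μ) * ∫ ω, f ω * exp (b * f ω) ∂μ
      ≤ (∫ ω, exp (a * f ω) ∂μ) * ∫ ω, f ω * exp (b * f ω) ∂μ := by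
        gcongr
        exact integral_nonneg fun ω => mul_nonneg (hf0 ω) (exp_pos _).le
    _ ≤ ∫ ω, f ω * exp ((a + b) * f ω) ∂μ := by
        simp_rw [h_split]
        refine integral_mul_integral_le_of_monovary (monovary_exp_mul_mul_exp hf0 ha hb) h_exp
          h_mul ?_
        simpa [← h_split] using h_int hab 1

lemma integral_mul_exp_integral_sub_one_le (hf : AEMeasurable f μ) (hf0 : ∀ ω, 0 ≤ f ω)
    {a K : ℝ} (ha : 0 ≤ a) (hK : Integrable (fun ω => exp (K * f ω)) μ) (haK : a < K) :
    (∫ ω, f ω ∂μ) * (exp (a * ∫ ω, f ω ∂μ) - 1) ≤ ∫ ω, f ω * (exp (a * f ω) - 1) ∂μ := by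
  have h_int : Integrable f μ := by
    simpa using integrable_pow_mul_exp_mul_of_lt hf hf0 hK (ha.trans_lt haK) 1
  have h_mul : Integrable (fun ω => f ω * exp (a * f ω)) μ := by
    simpa using integrable_pow_mul_exp_mul_of_lt hf hf0 hK haK 1
  simp only [mul_sub_one]
  rw [integral_sub h_mul h_int, mul_comm]
  simpa using exp_integral_mul_integral_mul_exp_le hf hf0 ha le_rfl hK (by simpa using haK)

end ExponentialMoments

section Mean

variable {E : Type*} [NormedAddCommGroup E] [InnerProductSpace ℝ E] [CompleteSpace E]
  [MeasurableSpace E] {P : Measure E} [IsProbabilityMeasure P]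

lemma integral_sub_mean_eq_zero {m : E} (hm : ∫ x, x ∂P = m) : ∫ x, (x - m) ∂P = 0 := by
  simpa [average_eq_integral, hm] using integral_sub_average P fun x => x

lemma integral_norm_sub_sq_eq (hP : MemLp (fun x => x) 2 P) (p : E) :
    ∫ x, ‖x - p‖ ^ 2 ∂P = ∫ x, ‖x - ∫ z, z ∂P‖ ^ 2 ∂P + ‖∫ z, z ∂P - p‖ ^ 2 := by
  set m := ∫ z, z ∂P
  have h_int : Integrable (fun x => x - m) P := (hP.integrable one_le_two).sub (integrable_const m)
  have h_cross : ∫ x, ⟪m - p, x - m⟫ ∂P = 0 := by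
    rw [integral_inner h_int, integral_sub_mean_eq_zero rfl, inner_zero_right]
  have h_expand (x : E) :
      ‖x - p‖ ^ 2 = ‖x - m‖ ^ 2 + (2 * ⟪m - p, x - m⟫ + ‖m - p‖ ^ 2) := by
    rw [← sub_add_sub_cancel x m p, norm_add_sq_real, real_inner_comm]
    ring
  have h_inner : Integrable (fun x => 2 * ⟪m - p, x - m⟫) P := (h_int.const_inner _).const_mul 2
  have h_sq : Integrable (fun x => ‖x - m‖ ^ 2) P :=
    (hP.sub (memLp_const m)).integrable_norm_pow two_ne_zero
  rw [integral_congr_ae (.of_forall h_expand), integral_add h_sq (by fun_prop),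
    integral_add h_inner (by fun_prop), integral_const_mul, h_cross]
  simp

lemma integral_norm_sub_mean_sq_le (hP : MemLp (fun x => x) 2 P) (p : E) :
    ∫ x, ‖x - ∫ z, z ∂P‖ ^ 2 ∂P ≤ ∫ x, ‖x - p‖ ^ 2 ∂P := by
  rw [integral_norm_sub_sq_eq hP p]
  exact le_add_of_nonneg_right (sq_nonneg _)

lemma norm_mean_sub_sq_le (hP : MemLp (fun x => x) 2 P) (p : E) :
    ‖∫ z, z ∂P - p‖ ^ 2 ≤ ∫ x, ‖x - p‖ ^ 2 ∂P := by
  rw [integral_norm_sub_sq_eq hP p]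
  exact le_add_of_nonneg_left (integral_nonneg fun _ => sq_nonneg _)

end Mean

section CenteredMoments

variable {E : Type*} [NormedAddCommGroup E]

lemma norm_sub_sq_le_two_mul_add (x y z : E) :
    ‖x - y‖ ^ 2 ≤ 2 * ‖x - z‖ ^ 2 + 2 * ‖y - z‖ ^ 2 := by
  have h := norm_sub_le_norm_sub_add_norm_sub x z y
  rw [norm_sub_rev z y] at h
  nlinarith [norm_nonneg (x - y), sq_nonneg (‖x - z‖ - ‖y - z‖)]

lemma integrable_norm_pow_mul_exp_mul_norm_sq {Ω : Type*} [MeasurableSpace Ω] {μ : Measure Ω}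
    {f : Ω → E} (hf : AEStronglyMeasurable f μ) {c K : ℝ}
    (hK : Integrable (fun ω => exp (K * ‖f ω‖ ^ 2)) μ) (hc : c < K) (n : ℕ) :
    Integrable (fun ω => ‖f ω‖ ^ n * exp (c * ‖f ω‖ ^ 2)) μ := by
  have h_int (k : ℕ) : Integrable (fun ω => (‖f ω‖ ^ 2) ^ k * exp (c * ‖f ω‖ ^ 2)) μ :=
    integrable_pow_mul_exp_mul_of_lt (hf.norm.aemeasurable.pow_const 2) (by simp) hK hc k
  refine ((h_int 0).add (h_int n)).mono' (by fun_prop) (.of_forall fun ω => ?_)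
  rw [norm_of_nonneg (by positivity), Pi.add_apply, ← add_mul, pow_zero, pow_right_comm]
  gcongr
  nlinarith [sq_nonneg (‖f ω‖ ^ n - 1)]

lemma abs_real_inner_pow_mul_exp_le [InnerProductSpace ℝ E] {s : ℝ} (hs : 0 ≤ s) (n : ℕ) (x y : E) :
    |⟪x, y⟫| ^ n * exp (s * |⟪x, y⟫|) ≤
      (‖x‖ ^ n * exp (s / 2 * ‖x‖ ^ 2)) * (‖y‖ ^ n * exp (s / 2 * ‖y‖ ^ 2)) := by
  have h := abs_real_inner_le_norm x y
  rw [mul_mul_mul_comm, ← mul_pow, ← exp_add]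
  gcongr
  nlinarith [sq_nonneg (‖x‖ - ‖y‖)]

variable [MeasurableSpace E] [SecondCountableTopology E] [BorelSpace E] {P : Measure E}
  {c s K : ℝ} {p : E}

lemma integrable_exp_mul_norm_sub_sq_of_two_mul
    (hK : Integrable (fun x => exp (2 * c * ‖x - p‖ ^ 2)) P) (hc : 0 ≤ c) (m : E) :
    Integrable (fun x => exp (c * ‖x - m‖ ^ 2)) P := by
  refine (hK.mul_const (exp (2 * c * ‖m - p‖ ^ 2))).mono' (by fun_prop) (.of_forall fun x => ?_)
  rw [norm_eq_abs, abs_exp, ← exp_add, exp_le_exp]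
  linarith [mul_le_mul_of_nonneg_left (norm_sub_sq_le_two_mul_add x m p) hc]

lemma integrable_inner_pow_mul_exp_inner [InnerProductSpace ℝ E] [SFinite P] {m : E}
    (hK : Integrable (fun x => exp (K * ‖x - m‖ ^ 2)) P) (hs : 0 ≤ s) (hsK : s / 2 < K) (n : ℕ) :
    Integrable (fun q : E × E => |⟪q.1 - m, q.2 - m⟫| ^ n * exp (s * |⟪q.1 - m, q.2 - m⟫|))
      (P.prod P) := by
  have h := integrable_norm_pow_mul_exp_mul_norm_sq (f := fun x => x - m) (by fun_prop) hK hsK n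
  refine (h.mul_prod h).mono' (by fun_prop) (.of_forall fun q => ?_)
  rw [norm_of_nonneg (by positivity)]
  exact abs_real_inner_pow_mul_exp_le hs n _ _

variable [IsProbabilityMeasure P]

lemma memLp_two_of_integrable_exp_mul_norm_sub_sq
    (hK : Integrable (fun x => exp (K * ‖x - p‖ ^ 2)) P) (hK0 : 0 < K) :
    MemLp (fun x => x) 2 P := by
  have h : MemLp (fun x => x - p) 2 P := by
    rw [memLp_two_iff_integrable_sq_norm (by fun_prop)]
    simpa using integrable_norm_pow_mul_exp_mul_norm_sq (by fun_prop) hK hK0 2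
  simpa [Function.comp_def, Pi.add_def] using h.add (memLp_const p)

variable [InnerProductSpace ℝ E] [CompleteSpace E] {m : E}

lemma integral_norm_sub_mean_sq_mul_exp_le (hm : ∫ x, x ∂P = m) (hc : 0 ≤ c)
    (hK : Integrable (fun x => exp (K * ‖x - p‖ ^ 2)) P) (hcK : 32 * c < K) :
    ∫ x, ‖x - m‖ ^ 2 * exp (c * ‖x - m‖ ^ 2) ∂P ≤
      ∫ x, ‖x - p‖ ^ 2 * exp (32 * c * ‖x - p‖ ^ 2) ∂P := by
  have h_memLp : MemLp (fun x => x) 2 P :=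
    memLp_two_of_integrable_exp_mul_norm_sub_sq hK (by linarith)
  have h_int {b : ℝ} (hb : b < K) :
      Integrable (fun x => ‖x - p‖ ^ 2 * exp (b * ‖x - p‖ ^ 2)) P :=
    integrable_norm_pow_mul_exp_mul_norm_sq (by fun_prop) hK hb 2
  have h_var : Integrable (fun x => ‖x - p‖ ^ 2) P := by simpa using h_int (b := 0) (by linarith)
  let a (x : E) : ℝ := ‖x - p‖ ^ 2
  let φ (u : ℝ) : ℝ := u * (exp (4 * c * u) - 1)
  have h_sq : Integrable (fun x => ‖x - m‖ ^ 2) P :=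
    (h_memLp.sub (memLp_const m)).integrable_norm_pow two_ne_zero
  have hφ : Integrable (fun x => φ (a x)) P := by
    simpa [φ, a, mul_sub, Pi.sub_def] using (h_int (b := 4 * c) (by linarith)).sub h_var
  have h_point (x : E) :
      ‖x - m‖ ^ 2 * exp (c * ‖x - m‖ ^ 2) ≤
        ‖x - m‖ ^ 2 + 4 * φ (a x) + 4 * φ (∫ x, a x ∂P) := by
    have h_shift := mul_exp_sub_one_le_of_le_two_mul_add hc (by positivity) (by positivity)
      (by positivity) (norm_sub_sq_le_two_mul_add x m p)
    have h_mean : φ (‖m - p‖ ^ 2) ≤ φ (∫ x, a x ∂P) :=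
      mul_exp_sub_one_mono (by positivity) (by positivity) (hm ▸ norm_mean_sub_sq_le h_memLp p)
    linarith
  have h_jensen : φ (∫ x, a x ∂P) ≤ ∫ x, φ (a x) ∂P :=
    integral_mul_exp_integral_sub_one_le (by fun_prop) (fun x => sq_nonneg _) (by positivity) hK
      (by linarith)
  have h_dom {u : ℝ} (hu : 0 ≤ u) : u + 8 * φ u ≤ u * exp (32 * c * u) := by
    have h := mul_le_mul_of_nonneg_left (mul_exp_sub_one_le_exp_mul_sub_one 8 (4 * c * u)) hu
    rw [Nat.cast_ofNat, show 8 * (4 * c * u) = 32 * c * u by ring] at h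
    linarith
  calc ∫ x, ‖x - m‖ ^ 2 * exp (c * ‖x - m‖ ^ 2) ∂P
      ≤ ∫ x, (‖x - m‖ ^ 2 + 4 * φ (a x) + 4 * φ (∫ x, a x ∂P)) ∂P :=
        integral_mono_of_nonneg (.of_forall fun x => by positivity)
          ((h_sq.add (hφ.const_mul 4)).add (integrable_const _)) (.of_forall h_point)
    _ = ∫ x, ‖x - m‖ ^ 2 ∂P + 4 * ∫ x, φ (a x) ∂P + 4 * φ (∫ x, a x ∂P) := by
        rw [integral_add (h_sq.fun_add (hφ.const_mul 4)) (integrable_const _),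
          integral_add h_sq (hφ.const_mul 4), integral_const_mul]
        simp
    _ ≤ ∫ x, a x ∂P + 8 * ∫ x, φ (a x) ∂P := by
        linarith [hm ▸ integral_norm_sub_mean_sq_le h_memLp p]
    _ = ∫ x, (a x + 8 * φ (a x)) ∂P := by
        rw [integral_add h_var (hφ.const_mul 8), integral_const_mul]
    _ ≤ ∫ x, ‖x - p‖ ^ 2 * exp (32 * c * ‖x - p‖ ^ 2) ∂P :=
        integral_mono (h_var.add (hφ.const_mul 8)) (h_int hcK) fun x => h_dom (sq_nonneg _)

lemma integral_inner_mul_exp_inner_le (hm : ∫ x, x ∂P = m)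
    (hK : Integrable (fun x => exp (K * ‖x - m‖ ^ 2)) P) (hs : 0 ≤ s) (hsK : s / 2 < K) :
    ∫ q, ⟪q.1 - m, q.2 - m⟫ * exp (s * ⟪q.1 - m, q.2 - m⟫) ∂P.prod P ≤
      s * (∫ x, ‖x - m‖ ^ 2 * exp (s / 2 * ‖x - m‖ ^ 2) ∂P) ^ 2 := by
  let θ (q : E × E) : ℝ := ⟪q.1 - m, q.2 - m⟫
  have h_int (n : ℕ) : Integrable (fun q => |θ q| ^ n * exp (s * |θ q|)) (P.prod P) :=
    integrable_inner_pow_mul_exp_inner hK hs hsK n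
  have hθ : Integrable θ (P.prod P) := by
    refine (integrable_norm_iff (by fun_prop)).1 ?_
    simpa using integrable_inner_pow_mul_exp_inner (s := 0) hK le_rfl (by linarith) 1
  have hθ0 : ∫ q, θ q ∂P.prod P = 0 := by
    have h_id : Integrable (fun x => x) P :=
      (memLp_two_of_integrable_exp_mul_norm_sub_sq hK (by linarith)).integrable one_le_two
    have h_int : Integrable (fun x => x - m) P := h_id.sub (integrable_const m)
    exact (integral_prod_bilin (innerSL ℝ) h_int h_int).trans <| by
      rw [integral_sub_mean_eq_zero hm, map_zero]
  have hsq := integrable_norm_pow_mul_exp_mul_norm_sq (f := fun x => x - m) (by fun_prop) hK hsK 2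
  have h_exp : Integrable (fun q => θ q * exp (s * θ q)) (P.prod P) := by
    refine (h_int 1).mono' (by fun_prop) (.of_forall fun q => ?_)
    rw [norm_mul, norm_eq_abs, norm_eq_abs, abs_exp, pow_one]
    gcongr
    exact le_abs_self _
  calc ∫ q, θ q * exp (s * θ q) ∂P.prod P
      = ∫ q, (θ q * exp (s * θ q) - θ q) ∂P.prod P := by rw [integral_sub h_exp hθ, hθ0, sub_zero]
    _ ≤ ∫ q : E × E, s * ((‖q.1 - m‖ ^ 2 * exp (s / 2 * ‖q.1 - m‖ ^ 2)) *
          (‖q.2 - m‖ ^ 2 * exp (s / 2 * ‖q.2 - m‖ ^ 2))) ∂P.prod P := by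
        refine integral_mono (h_exp.sub hθ) ((hsq.mul_prod hsq).const_mul s) fun q => ?_
        refine (mul_exp_mul_sub_self_le hs (θ q)).trans ?_
        rw [← sq_abs]
        exact mul_le_mul_of_nonneg_left (abs_real_inner_pow_mul_exp_le hs 2 _ _) hs
    _ = s * (∫ x, ‖x - m‖ ^ 2 * exp (s / 2 * ‖x - m‖ ^ 2) ∂P) ^ 2 := by
        rw [integral_const_mul, integral_prod_mul (fun x => ‖x - m‖ ^ 2 * exp (s / 2 * ‖x - m‖ ^ 2))
          fun x => ‖x - m‖ ^ 2 * exp (s / 2 * ‖x - m‖ ^ 2), sq]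

end CenteredMoments

section Channel

variable {E : Type*} [NormedAddCommGroup E] [InnerProductSpace ℝ E]

/-- The log-likelihood of the signal `x` given the observation `y = t • x + z` of a standard
Gaussian channel, relative to the law of the pure noise `z`. -/
def logLik (t : ℝ) (y x : E) : ℝ := ⟪t • x, y⟫ - ‖t • x‖ ^ 2 / 2

lemma logLik_eq (t : ℝ) (y x : E) : logLik t y x = ‖y‖ ^ 2 / 2 - ‖y - t • x‖ ^ 2 / 2 := by
  rw [logLik, norm_sub_sq_real, real_inner_comm]
  ring

lemma logLik_le (t : ℝ) (y x : E) : logLik t y x ≤ ‖y‖ ^ 2 / 2 := by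
  rw [logLik_eq]
  exact sub_le_self _ (by positivity)

lemma logLik_add_logLik_sub_logLik (t : ℝ) (y x x' m : E) :
    logLik t y x + logLik t y x' - logLik t y m =
      t ^ 2 * ⟪x - m, x' - m⟫ + logLik t y (x + x' - m) := by
  simp only [logLik, norm_smul, norm_eq_abs, mul_pow, sq_abs, norm_sub_sq_real, norm_add_sq_real,
    inner_sub_left, inner_add_left, inner_sub_right, real_inner_smul_left,
    real_inner_self_eq_norm_sq, real_inner_comm m x']
  ring

variable [MeasurableSpace E]

/-- The density, with respect to the law of the pure noise, of the law of the observation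
`t • x + z` when the signal `x` has law `Q`. -/
def evidence (Q : Measure E) (t : ℝ) (y : E) : ℝ := ∫ x, exp (logLik t y x) ∂Q

/-- The law of a signal with prior law `Q` given that the observation `t • x + z` equals `y`. -/
def posteriorLaw (Q : Measure E) (t : ℝ) (y : E) : Measure E := Q.tilted (logLik t y)

/-- The mean of the posterior law, i.e. the optimal estimate of the signal. -/
def posteriorMean (Q : Measure E) (t : ℝ) (y : E) : E := ∫ x, x ∂posteriorLaw Q t y

variable [BorelSpace E] {Q : Measure E} [IsFiniteMeasure Q] {t : ℝ} {y : E}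

lemma integrable_exp_logLik (t : ℝ) (y : E) : Integrable (fun x => exp (logLik t y x)) Q := by
  refine (integrable_const (exp (‖y‖ ^ 2 / 2))).mono' ?_ (.of_forall fun x => ?_)
  · unfold logLik
    fun_prop
  · rw [norm_eq_abs, abs_exp, exp_le_exp]
    exact logLik_le t y x

instance [NeZero Q] : IsProbabilityMeasure (posteriorLaw Q t y) :=
  isProbabilityMeasure_tilted (integrable_exp_logLik t y)

lemma evidence_pos [NeZero Q] (t : ℝ) (y : E) : 0 < evidence Q t y :=
  integral_exp_pos (integrable_exp_logLik t y)

lemma integrable_posteriorLaw_iff {G : Type*} [NormedAddCommGroup G] [NormedSpace ℝ G] {f : E → G} :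
    Integrable f (posteriorLaw Q t y) ↔ Integrable (fun x => exp (logLik t y x) • f x) Q :=
  integrable_tilted_iff (integrable_exp_logLik t y) f

lemma memLp_two_posteriorLaw {H : Type*} [NormedAddCommGroup H] {f : E → H} (hf : MemLp f 2 Q) :
    MemLp f 2 (posteriorLaw Q t y) := by
  refine (memLp_two_iff_integrable_sq_norm
    (hf.1.mono_ac (tilted_absolutelyContinuous _ _))).2 (integrable_posteriorLaw_iff.2 ?_)
  refine (hf.integrable_norm_pow two_ne_zero).bdd_smul (exp (‖y‖ ^ 2 / 2))
    (integrable_exp_logLik t y).1 (.of_forall fun x => ?_)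
  rw [norm_eq_abs, abs_exp, exp_le_exp]
  exact logLik_le t y x

variable {G : Type*} [NormedAddCommGroup G] [NormedSpace ℝ G]

lemma evidence_smul_integral_posteriorLaw [NeZero Q] (t : ℝ) (y : E) (f : E → G) :
    evidence Q t y • ∫ x, f x ∂posteriorLaw Q t y = ∫ x, exp (logLik t y x) • f x ∂Q := by
  rw [posteriorLaw, integral_tilted, ← integral_smul]
  refine integral_congr_ae (.of_forall fun x => ?_)
  change evidence Q t y • (exp (logLik t y x) / evidence Q t y) • f x = _
  rw [smul_smul, mul_div_cancel₀ _ (evidence_pos t y).ne']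

variable [FiniteDimensional ℝ E]

@[fun_prop]
lemma measurable_logLik (t : ℝ) : Measurable fun p : E × E => logLik t p.2 p.1 := by
  unfold logLik
  fun_prop

lemma measurable_evidence (t : ℝ) : Measurable (evidence Q t) :=
  (StronglyMeasurable.integral_prod_left (f := fun x y => exp (logLik t y x))
    (measurable_logLik t).exp.stronglyMeasurable).measurable

lemma stronglyMeasurable_integral_posteriorLaw [NeZero Q] (t : ℝ) {F : E × E → G}
    (hF : StronglyMeasurable F) :
    StronglyMeasurable fun y => ∫ x, F (x, y) ∂posteriorLaw Q t y := by
  have h (y : E) : ∫ x, F (x, y) ∂posteriorLaw Q t y =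
      (evidence Q t y)⁻¹ • ∫ x, exp (logLik t y x) • F (x, y) ∂Q := by
    rw [← evidence_smul_integral_posteriorLaw, inv_smul_smul₀ (evidence_pos t y).ne']
  simp_rw [h]
  exact (measurable_evidence t).inv.stronglyMeasurable.smul
    (((measurable_logLik t).exp.stronglyMeasurable.smul hF).integral_prod_left')

lemma map_prodMk_smul_add (Q : Measure E) [IsFiniteMeasure Q] (t : ℝ) :
    (Q.prod (stdGaussian E)).map (fun p => (p.1, t • p.1 + p.2)) =
      (Q.prod (stdGaussian E)).withDensity fun p => .ofReal (exp (logLik t p.2 p.1)) := by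
  have h_meas : Measurable fun p : E × E => ENNReal.ofReal (exp (logLik t p.2 p.1)) := by fun_prop
  refine Measure.ext_of_lintegral _ fun f hf => ?_
  rw [lintegral_map hf (by fun_prop), lintegral_withDensity_eq_lintegral_mul _ h_meas hf,
    lintegral_prod _ (by fun_prop), lintegral_prod _ (by fun_prop)]
  refine lintegral_congr fun x => ?_
  calc ∫⁻ z, f (x, t • x + z) ∂stdGaussian E
      = ∫⁻ y, f (x, y) ∂(stdGaussian E).map (t • x + ·) := by
        rw [lintegral_map (by fun_prop) (by fun_prop)]
    _ = ∫⁻ y, .ofReal (exp (logLik t y x)) * f (x, y) ∂stdGaussian E := by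
        rw [map_const_add_stdGaussian,
          lintegral_withDensity_eq_lintegral_mul _ (by fun_prop) (by fun_prop)]
        rfl

lemma integrable_exp_logLik_smul_iff {F : E × E → G} (hF : StronglyMeasurable F) :
    Integrable (fun p => exp (logLik t p.2 p.1) • F p) (Q.prod (stdGaussian E)) ↔
      Integrable (fun p => F (p.1, t • p.1 + p.2)) (Q.prod (stdGaussian E)) := by
  change _ ↔ Integrable (F ∘ fun p : E × E => (p.1, t • p.1 + p.2)) _
  rw [← integrable_map_measure hF.aestronglyMeasurable (by fun_prop), map_prodMk_smul_add,
    integrable_withDensity_iff_integrable_smul' (by fun_prop) (by simp)]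
  simp_rw [ENNReal.toReal_ofReal (exp_pos _).le]

variable [NeZero Q] {F : E × E → G}

lemma integrable_evidence_smul_integral_posteriorLaw (hF : StronglyMeasurable F)
    (hF_int : Integrable (fun p => F (p.1, t • p.1 + p.2)) (Q.prod (stdGaussian E))) :
    Integrable (fun y => evidence Q t y • ∫ x, F (x, y) ∂posteriorLaw Q t y) (stdGaussian E) := by
  simp_rw [evidence_smul_integral_posteriorLaw]
  exact ((integrable_exp_logLik_smul_iff hF).2 hF_int).integral_prod_right

lemma integral_evidence_smul_integral_posteriorLaw (hF : StronglyMeasurable F)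
    (hF_int : Integrable (fun p => F (p.1, t • p.1 + p.2)) (Q.prod (stdGaussian E))) :
    ∫ y, evidence Q t y • ∫ x, F (x, y) ∂posteriorLaw Q t y ∂stdGaussian E =
      ∫ p, F (p.1, t • p.1 + p.2) ∂Q.prod (stdGaussian E) := by
  simp_rw [evidence_smul_integral_posteriorLaw]
  rw [← integral_prod_symm _ ((integrable_exp_logLik_smul_iff hF).2 hF_int),
    ← integral_map (f := F) (φ := fun p : E × E => (p.1, t • p.1 + p.2)) (by fun_prop)
      hF.aestronglyMeasurable,
    map_prodMk_smul_add, integral_withDensity_eq_integral_toReal_smul (by fun_prop) (by simp)]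
  simp_rw [ENNReal.toReal_ofReal (exp_pos _).le]

end Channel

section EstimateEnergy

variable {E : Type*} [NormedAddCommGroup E] [InnerProductSpace ℝ E] [FiniteDimensional ℝ E]
  [MeasurableSpace E] [BorelSpace E]

/-- The mean squared norm of the optimal estimate of a signal with law `Q` observed at amplitude
`t`, the observation being distributed with density `evidence Q t`. -/
def estimateEnergy (Q : Measure E) (t : ℝ) : ℝ :=
  ∫ y, evidence Q t y * ‖posteriorMean Q t y‖ ^ 2 ∂stdGaussian E

variable {Q : Measure E} [IsProbabilityMeasure Q]

lemma integrable_evidence (t : ℝ) : Integrable (evidence Q t) (stdGaussian E) := by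
  simpa using integrable_evidence_smul_integral_posteriorLaw (Q := Q) (t := t)
    (F := fun _ => (1 : ℝ)) stronglyMeasurable_const (by fun_prop)

lemma integral_evidence (t : ℝ) : ∫ y, evidence Q t y ∂stdGaussian E = 1 := by
  simpa using integral_evidence_smul_integral_posteriorLaw (Q := Q) (t := t)
    (F := fun _ => (1 : ℝ)) stronglyMeasurable_const (by fun_prop)

lemma integrable_evidence_smul_posteriorMean (hQ : Integrable (fun x => x) Q) (t : ℝ) :
    Integrable (fun y => evidence Q t y • posteriorMean Q t y) (stdGaussian E) :=
  integrable_evidence_smul_integral_posteriorLaw (F := fun p => p.1)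
    measurable_fst.stronglyMeasurable (hQ.comp_fst _)

lemma integral_evidence_smul_posteriorMean (hQ : Integrable (fun x => x) Q) (t : ℝ) :
    ∫ y, evidence Q t y • posteriorMean Q t y ∂stdGaussian E = ∫ x, x ∂Q :=
  (integral_evidence_smul_integral_posteriorLaw (F := fun p => p.1)
    measurable_fst.stronglyMeasurable (hQ.comp_fst _)).trans <| by
      simp [integral_fun_fst fun x => x]

lemma measurable_posteriorMean (t : ℝ) : Measurable (posteriorMean Q t) :=
  (stronglyMeasurable_integral_posteriorLaw t measurable_fst.stronglyMeasurable).measurable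

lemma integrable_evidence_mul_integral_norm_sq (hQ : MemLp (fun x => x) 2 Q) (t : ℝ) :
    Integrable (fun y => evidence Q t y * ∫ x, ‖x‖ ^ 2 ∂posteriorLaw Q t y) (stdGaussian E) :=
  integrable_evidence_smul_integral_posteriorLaw (F := fun p => ‖p.1‖ ^ 2) (by fun_prop)
    ((hQ.integrable_norm_pow two_ne_zero).comp_fst _)

lemma integral_evidence_mul_integral_norm_sq (hQ : MemLp (fun x => x) 2 Q) (t : ℝ) :
    ∫ y, evidence Q t y * ∫ x, ‖x‖ ^ 2 ∂posteriorLaw Q t y ∂stdGaussian E = ∫ x, ‖x‖ ^ 2 ∂Q :=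
  (integral_evidence_smul_integral_posteriorLaw (F := fun p => ‖p.1‖ ^ 2) (by fun_prop)
    ((hQ.integrable_norm_pow two_ne_zero).comp_fst _)).trans <| by
      simp [integral_fun_fst fun x : E => ‖x‖ ^ 2]

lemma integrable_evidence_mul_norm_posteriorMean_sq (hQ : MemLp (fun x => x) 2 Q) (t : ℝ) :
    Integrable (fun y => evidence Q t y * ‖posteriorMean Q t y‖ ^ 2) (stdGaussian E) := by
  refine (integrable_evidence_mul_integral_norm_sq hQ t).mono' ?_ (.of_forall fun y => ?_)
  · exact ((measurable_evidence t).mul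
      ((measurable_posteriorMean t).norm.pow_const 2)).aestronglyMeasurable
  · have h_nonneg := (evidence_pos (Q := Q) t y).le
    rw [norm_of_nonneg (by positivity)]
    gcongr
    simpa [posteriorMean] using norm_mean_sub_sq_le (memLp_two_posteriorLaw hQ (t := t) (y := y)) 0

lemma estimateEnergy_eq (hQ : MemLp (fun x => x) 2 Q) (t : ℝ) :
    estimateEnergy Q t = ‖∫ x, x ∂Q‖ ^ 2 +
      ∫ y, evidence Q t y * ‖posteriorMean Q t y - ∫ x, x ∂Q‖ ^ 2 ∂stdGaussian E := by
  have hQ_int := hQ.integrable one_le_two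
  set m := ∫ x, x ∂Q
  have h_expand (y : E) : evidence Q t y * ‖posteriorMean Q t y - m‖ ^ 2 =
      evidence Q t y * ‖posteriorMean Q t y‖ ^ 2 +
        (evidence Q t y * ‖m‖ ^ 2 - 2 * ⟪m, evidence Q t y • posteriorMean Q t y⟫) := by
    rw [norm_sub_sq_real, real_inner_smul_right, real_inner_comm]
    ring
  have h_sq := (integrable_evidence (Q := Q) t).mul_const (‖m‖ ^ 2)
  have h_smul := integrable_evidence_smul_posteriorMean hQ_int t
  have h_inner : Integrable (fun y => 2 * ⟪m, evidence Q t y • posteriorMean Q t y⟫)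
      (stdGaussian E) := (h_smul.const_inner m).const_mul 2
  rw [integral_congr_ae (.of_forall h_expand),
    integral_add (integrable_evidence_mul_norm_posteriorMean_sq hQ t) (by fun_prop),
    integral_sub h_sq h_inner, integral_mul_const, integral_evidence, integral_const_mul,
    integral_inner h_smul, integral_evidence_smul_posteriorMean hQ_int,
    real_inner_self_eq_norm_sq, estimateEnergy]
  ring

variable {m p : E} {t K : ℝ}

lemma exp_logLik_sub_le_evidence (hQ : MemLp (fun x => x) 2 Q) (hm : ∫ x, x ∂Q = m) (y : E) :
    exp (logLik t y m - t ^ 2 / 2 * ∫ x, ‖x - m‖ ^ 2 ∂Q) ≤ evidence Q t y := by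
  have h_id := hQ.integrable one_le_two
  have h_int : Integrable (fun x => x - m) Q := h_id.sub (integrable_const m)
  have h_sq : Integrable (fun x => ‖x - m‖ ^ 2) Q :=
    (hQ.sub (memLp_const m)).integrable_norm_pow two_ne_zero
  have h_inner : Integrable (fun x => ⟪t • y - t ^ 2 • m, x - m⟫) Q := h_int.const_inner _
  have h_expand (x : E) : logLik t y x =
      logLik t y m + ⟪t • y - t ^ 2 • m, x - m⟫ - t ^ 2 / 2 * ‖x - m‖ ^ 2 := by
    simp only [logLik, norm_smul, norm_eq_abs, mul_pow, sq_abs, norm_sub_sq_real, inner_sub_left,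
      inner_sub_right, real_inner_smul_left, real_inner_self_eq_norm_sq, real_inner_comm x y,
      real_inner_comm m y, real_inner_comm m x]
    ring
  have h_mean : ∫ x, logLik t y x ∂Q = logLik t y m - t ^ 2 / 2 * ∫ x, ‖x - m‖ ^ 2 ∂Q := by
    rw [integral_congr_ae (.of_forall h_expand), integral_sub (by fun_prop) (by fun_prop),
      integral_add (by fun_prop) h_inner, integral_inner h_int, integral_sub_mean_eq_zero hm,
      integral_const_mul]
    simp
  rw [← h_mean]
  exact convexOn_exp.map_integral_le continuous_exp.continuousOn isClosed_univ (by simp)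
    (.congr (by fun_prop) (.of_forall fun x => (h_expand x).symm)) (integrable_exp_logLik t y)

lemma integral_exp_logLik (t : ℝ) (x : E) : ∫ y, exp (logLik t y x) ∂stdGaussian E = 1 := by
  simp_rw [logLik, exp_sub]
  rw [integral_div, integral_exp_inner_stdGaussian, div_self (exp_pos _).ne']

lemma integral_exp_logLik_add_logLik_sub_logLik (t : ℝ) (x x' m : E) :
    ∫ y, exp (logLik t y x + logLik t y x' - logLik t y m) ∂stdGaussian E =
      exp (t ^ 2 * ⟪x - m, x' - m⟫) := by
  simp_rw [logLik_add_logLik_sub_logLik, exp_add]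
  rw [integral_const_mul, integral_exp_logLik, mul_one]

lemma evidence_mul_norm_posteriorMean_sub_sq_le (hQ : MemLp (fun x => x) 2 Q)
    (hm : ∫ x, x ∂Q = m) (y : E) :
    evidence Q t y * ‖posteriorMean Q t y - m‖ ^ 2 ≤
      exp (t ^ 2 / 2 * ∫ x, ‖x - m‖ ^ 2 ∂Q) *
        ∫ q, ⟪q.1 - m, q.2 - m⟫ * exp (logLik t y q.1 + logLik t y q.2 - logLik t y m)
          ∂Q.prod Q := by
  have h_post : Integrable (fun x => x) (posteriorLaw Q t y) :=
    (memLp_two_posteriorLaw hQ).integrable one_le_two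
  have h_int : Integrable (fun x => exp (logLik t y x) • (x - m)) Q :=
    integrable_posteriorLaw_iff.1 (h_post.sub (integrable_const m))
  have h_smul : evidence Q t y • (posteriorMean Q t y - m) =
      ∫ x, exp (logLik t y x) • (x - m) ∂Q := by
    rw [← evidence_smul_integral_posteriorLaw, integral_sub h_post (integrable_const m)]
    simp [posteriorMean]
  have h_pos : 0 < evidence Q t y := evidence_pos t y
  have h_sq : (evidence Q t y * ‖posteriorMean Q t y - m‖) ^ 2 =
      ∫ q, ⟪q.1 - m, q.2 - m⟫ * exp (logLik t y q.1 + logLik t y q.2) ∂Q.prod Q := by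
    rw [← norm_of_nonneg h_pos.le, ← norm_smul, h_smul, ← real_inner_self_eq_norm_sq]
    refine (integral_prod_bilin (innerSL ℝ) h_int h_int).symm.trans
      (integral_congr_ae (.of_forall fun q => ?_))
    change ⟪exp (logLik t y q.1) • (q.1 - m), exp (logLik t y q.2) • (q.2 - m)⟫ =
      ⟪q.1 - m, q.2 - m⟫ * exp (logLik t y q.1 + logLik t y q.2)
    rw [real_inner_smul_left, real_inner_smul_right, exp_add]
    ring
  calc evidence Q t y * ‖posteriorMean Q t y - m‖ ^ 2
      = (evidence Q t y * ‖posteriorMean Q t y - m‖) ^ 2 / evidence Q t y := by field_simp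
    _ ≤ (evidence Q t y * ‖posteriorMean Q t y - m‖) ^ 2 /
          exp (logLik t y m - t ^ 2 / 2 * ∫ x, ‖x - m‖ ^ 2 ∂Q) := by
        gcongr
        exact exp_logLik_sub_le_evidence hQ hm y
    _ = _ := by
        simp_rw [h_sq, exp_sub, ← mul_div_assoc]
        rw [integral_div, div_div_eq_mul_div, mul_comm, mul_div_assoc]

lemma integrable_inner_mul_exp_logLik (hK : Integrable (fun x => exp (K * ‖x - m‖ ^ 2)) Q)
    (htK : t ^ 2 / 2 < K) :
    Integrable (fun r : E × E × E => ⟪r.2.1 - m, r.2.2 - m⟫ *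
      exp (logLik t r.1 r.2.1 + logLik t r.1 r.2.2 - logLik t r.1 m))
      ((stdGaussian E).prod (Q.prod Q)) := by
  refine (integrable_prod_iff' ?_).2 ⟨.of_forall fun q => ?_, ?_⟩
  · unfold logLik
    fun_prop
  · simp_rw [logLik_add_logLik_sub_logLik, exp_add]
    exact ((integrable_of_integral_eq_one (integral_exp_logLik t _)).const_mul _).const_mul _
  · simp_rw [norm_mul, norm_eq_abs, abs_exp]
    simp_rw [integral_const_mul, integral_exp_logLik_add_logLik_sub_logLik]
    refine (integrable_inner_pow_mul_exp_inner hK (sq_nonneg t) htK 1).mono' (by fun_prop)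
      (.of_forall fun q => ?_)
    rw [norm_mul, norm_eq_abs, norm_eq_abs, abs_abs, abs_exp, pow_one]
    gcongr
    exact le_abs_self _

lemma estimateEnergy_le_add_integral_inner (hm : ∫ x, x ∂Q = m)
    (hK : Integrable (fun x => exp (K * ‖x - m‖ ^ 2)) Q) (hK0 : 0 < K) (htK : t ^ 2 / 2 < K) :
    estimateEnergy Q t ≤ ‖m‖ ^ 2 + exp (t ^ 2 / 2 * ∫ x, ‖x - m‖ ^ 2 ∂Q) *
      ∫ q, ⟪q.1 - m, q.2 - m⟫ * exp (t ^ 2 * ⟪q.1 - m, q.2 - m⟫) ∂Q.prod Q := by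
  have hQ : MemLp (fun x => x) 2 Q := memLp_two_of_integrable_exp_mul_norm_sub_sq hK hK0
  have h_int := integrable_inner_mul_exp_logLik hK htK
  have h_swap : ∫ y, ∫ q, ⟪q.1 - m, q.2 - m⟫ *
        exp (logLik t y q.1 + logLik t y q.2 - logLik t y m) ∂Q.prod Q ∂stdGaussian E =
      ∫ q, ⟪q.1 - m, q.2 - m⟫ * exp (t ^ 2 * ⟪q.1 - m, q.2 - m⟫) ∂Q.prod Q := by
    rw [integral_integral_swap h_int]
    simp_rw [integral_const_mul, integral_exp_logLik_add_logLik_sub_logLik]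
  rw [estimateEnergy_eq hQ, hm, ← h_swap, ← integral_const_mul]
  gcongr ‖m‖ ^ 2 + ?_
  refine integral_mono_of_nonneg (.of_forall fun y => ?_) (h_int.integral_prod_left.const_mul _)
    (.of_forall fun y => evidence_mul_norm_posteriorMean_sub_sq_le hQ hm y)
  exact mul_nonneg (evidence_pos t y).le (sq_nonneg _)

lemma integral_sq_le_integral_sq {Ω : Type*} [MeasurableSpace Ω] {μ : Measure Ω}
    [IsProbabilityMeasure μ] {f : Ω → ℝ} (hf : MemLp f 2 μ) :
    (∫ ω, f ω ∂μ) ^ 2 ≤ ∫ ω, f ω ^ 2 ∂μ := by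
  have h := variance_nonneg f μ
  rw [variance_eq_sub hf] at h
  exact sub_nonneg.1 h

lemma exp_mul_integral_norm_sub_mean_sq_mul_exp_le (hm : ∫ x, x ∂Q = m) (ht : 0 < t ^ 2)
    (hp : Integrable (fun x => exp (49 * t ^ 2 * ‖x - p‖ ^ 2)) Q) :
    exp (t ^ 2 / 4 * ∫ x, ‖x - m‖ ^ 2 ∂Q) *
        ∫ x, ‖x - m‖ ^ 2 * exp (t ^ 2 / 2 * ‖x - m‖ ^ 2) ∂Q ≤
      ∫ x, ‖x - p‖ ^ 2 * exp (24 * t ^ 2 * ‖x - p‖ ^ 2) ∂Q := by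
  have hK : Integrable (fun x => exp (49 / 2 * t ^ 2 * ‖x - m‖ ^ 2)) Q :=
    integrable_exp_mul_norm_sub_sq_of_two_mul (by convert hp using 4; ring) (by positivity) m
  calc exp (t ^ 2 / 4 * ∫ x, ‖x - m‖ ^ 2 ∂Q) *
        ∫ x, ‖x - m‖ ^ 2 * exp (t ^ 2 / 2 * ‖x - m‖ ^ 2) ∂Q
      ≤ ∫ x, ‖x - m‖ ^ 2 * exp (3 / 4 * t ^ 2 * ‖x - m‖ ^ 2) ∂Q := by
        convert exp_integral_mul_integral_mul_exp_le (f := fun x => ‖x - m‖ ^ 2) (a := t ^ 2 / 4)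
          (b := t ^ 2 / 2) (by fun_prop) (by simp) (by positivity) (by positivity) hK
          (by linarith) using 4
        ring_nf
    _ ≤ ∫ x, ‖x - p‖ ^ 2 * exp (24 * t ^ 2 * ‖x - p‖ ^ 2) ∂Q := by
        convert integral_norm_sub_mean_sq_mul_exp_le hm (c := 3 / 4 * t ^ 2) (by positivity) hp
          (by linarith) using 6
        ring

theorem estimateEnergy_le_add_integral_norm_pow_four (hm : ∫ x, x ∂Q = m) (ht : 0 < t ^ 2)
    (hp : Integrable (fun x => exp (49 * t ^ 2 * ‖x - p‖ ^ 2)) Q) :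
    estimateEnergy Q t ≤
      ‖m‖ ^ 2 + t ^ 2 * ∫ x, ‖x - p‖ ^ 4 * exp (48 * t ^ 2 * ‖x - p‖ ^ 2) ∂Q := by
  let v : ℝ := ∫ x, ‖x - m‖ ^ 2 ∂Q
  let w : ℝ := ∫ x, ‖x - m‖ ^ 2 * exp (t ^ 2 / 2 * ‖x - m‖ ^ 2) ∂Q
  let f (x : E) : ℝ := ‖x - p‖ ^ 2 * exp (24 * t ^ 2 * ‖x - p‖ ^ 2)
  have : 0 ≤ w := integral_nonneg fun x => by positivity
  have hK : Integrable (fun x => exp (49 / 2 * t ^ 2 * ‖x - m‖ ^ 2)) Q :=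
    integrable_exp_mul_norm_sub_sq_of_two_mul (by convert hp using 4; ring) (by positivity) m
  have hf_sq (x : E) : f x ^ 2 = ‖x - p‖ ^ 4 * exp (48 * t ^ 2 * ‖x - p‖ ^ 2) := by
    rw [mul_pow, ← pow_mul, ← exp_nat_mul]
    ring_nf
  have hf : MemLp f 2 Q := by
    rw [memLp_two_iff_integrable_sq (by fun_prop)]
    simp_rw [hf_sq]
    exact integrable_norm_pow_mul_exp_mul_norm_sq (by fun_prop) hp (by linarith) 4
  calc estimateEnergy Q t
      ≤ ‖m‖ ^ 2 + exp (t ^ 2 / 2 * v) * (t ^ 2 * w ^ 2) := by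
        refine (estimateEnergy_le_add_integral_inner hm hK (by positivity) (by linarith)).trans ?_
        gcongr
        exact integral_inner_mul_exp_inner_le hm hK ht.le (by linarith)
    _ = ‖m‖ ^ 2 + t ^ 2 * (exp (t ^ 2 / 4 * v) * w) ^ 2 := by
        rw [mul_pow, ← exp_nat_mul]
        ring_nf
    _ ≤ ‖m‖ ^ 2 + t ^ 2 * (∫ x, f x ∂Q) ^ 2 := by
        gcongr
        exact exp_mul_integral_norm_sub_mean_sq_mul_exp_le hm ht hp
    _ ≤ ‖m‖ ^ 2 + t ^ 2 * ∫ x, f x ^ 2 ∂Q := by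
        gcongr
        exact integral_sq_le_integral_sq hf
    _ = _ := by simp_rw [hf_sq]

end EstimateEnergy

section Refinement

variable {E : Type*} [NormedAddCommGroup E] [InnerProductSpace ℝ E] {a t A : ℝ}

lemma logLik_add_logLik (hA : A ≠ 0) (h : A ^ 2 = a ^ 2 + t ^ 2) (y w : E) :
    logLik a y + logLik t w = logLik A ((a / A) • y + (t / A) • w) := by
  ext x
  simp only [Pi.add_apply, logLik, norm_smul, norm_eq_abs, mul_pow, sq_abs, inner_add_right,
    real_inner_smul_left, real_inner_smul_right, h]
  field_simp
  ring

lemma norm_sub_inv_smul_add_pow_four_mul_exp (ha : a ≠ 0) (c : ℝ) (x z : E) :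
    ‖x - a⁻¹ • (a • x + z)‖ ^ 4 * exp (c * ‖x - a⁻¹ • (a • x + z)‖ ^ 2) =
      1 / a ^ 4 * (‖z‖ ^ 4 * exp (c / a ^ 2 * ‖z‖ ^ 2)) := by
  have h_sq : ‖x - a⁻¹ • (a • x + z)‖ ^ 2 = ‖z‖ ^ 2 / a ^ 2 := by
    rw [smul_add, inv_smul_smul₀ ha, sub_add_cancel_left, norm_neg, norm_smul, mul_pow, norm_inv,
      norm_eq_abs, inv_pow, sq_abs, inv_mul_eq_div]
  have h_four : ‖x - a⁻¹ • (a • x + z)‖ ^ 4 = ‖z‖ ^ 4 / a ^ 4 := by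
    rw [pow_mul _ 2 2, h_sq, div_pow, ← pow_mul, ← pow_mul]
  rw [h_sq, h_four]
  ring_nf

variable [MeasurableSpace E] [BorelSpace E] {Q : Measure E}

lemma posteriorLaw_posteriorLaw [IsFiniteMeasure Q] (hA : A ≠ 0) (h : A ^ 2 = a ^ 2 + t ^ 2)
    (y w : E) :
    posteriorLaw (posteriorLaw Q a y) t w = posteriorLaw Q A ((a / A) • y + (t / A) • w) := by
  simp_rw [posteriorLaw, tilted_tilted (integrable_exp_logLik a y), logLik_add_logLik hA h]

lemma evidence_mul_evidence_posteriorLaw [IsFiniteMeasure Q] [NeZero Q] (hA : A ≠ 0)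
    (h : A ^ 2 = a ^ 2 + t ^ 2) (y w : E) :
    evidence Q a y * evidence (posteriorLaw Q a y) t w =
      evidence Q A ((a / A) • y + (t / A) • w) := by
  have h_tilt : evidence (posteriorLaw Q a y) t w =
      evidence Q A ((a / A) • y + (t / A) • w) / evidence Q a y := by
    rw [evidence, posteriorLaw, integral_exp_tilted, logLik_add_logLik hA h]
    rfl
  rw [h_tilt, mul_div_cancel₀ _ (evidence_pos a y).ne']

lemma integrable_exp_mul_norm_sub_inv_smul_sq_posteriorLaw [IsFiniteMeasure Q] {c : ℝ} (ha : a ≠ 0)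
    (hc : c ≤ a ^ 2 / 2) (y : E) :
    Integrable (fun x => exp (c * ‖x - a⁻¹ • y‖ ^ 2)) (posteriorLaw Q a y) := by
  have h_norm (x : E) : ‖y - a • x‖ ^ 2 = a ^ 2 * ‖x - a⁻¹ • y‖ ^ 2 := by
    rw [norm_sub_rev, ← sq_abs a, ← norm_eq_abs, ← mul_pow, ← norm_smul, smul_sub,
      smul_inv_smul₀ ha]
  refine integrable_posteriorLaw_iff.2 ((integrable_const (exp (‖y‖ ^ 2 / 2))).mono'
    ?_ (.of_forall fun x => ?_))
  · exact (integrable_exp_logLik a y).1.smul (Continuous.aestronglyMeasurable (by fun_prop))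
  · rw [smul_eq_mul, ← exp_add, norm_eq_abs, abs_exp, exp_le_exp, logLik_eq, h_norm]
    nlinarith [sq_nonneg ‖x - a⁻¹ • y‖]

variable [FiniteDimensional ℝ E]

variable (E) in
/-- The fourth moment of the norm of a standard Gaussian vector of `E`, with the exponential weight
`exp (c * ‖z‖ ^ 2)`; it is finite for `c < 1 / 2`. -/
def expFourthMoment (c : ℝ) : ℝ := ∫ z : E, ‖z‖ ^ 4 * exp (c * ‖z‖ ^ 2) ∂stdGaussian E

lemma integrable_norm_pow_four_mul_exp_stdGaussian {c : ℝ} (hc : c < 1 / 2) :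
    Integrable (fun z : E => ‖z‖ ^ 4 * exp (c * ‖z‖ ^ 2)) (stdGaussian E) := by
  obtain ⟨K, hcK, hK⟩ := exists_between hc
  exact integrable_norm_pow_mul_exp_mul_norm_sq (by fun_prop)
    (integrable_exp_mul_norm_sq_stdGaussian hK) hcK 4

lemma tendsto_expFourthMoment :
    Tendsto (expFourthMoment E) (𝓝 0) (𝓝 (finrank ℝ E * (finrank ℝ E + 2))) := by
  rw [← integral_norm_pow_four_stdGaussian]
  refine tendsto_integral_filter_of_dominated_convergence
    (fun z => ‖z‖ ^ 4 * exp (1 / 4 * ‖z‖ ^ 2)) (.of_forall fun c => by fun_prop) ?_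
    (integrable_norm_pow_four_mul_exp_stdGaussian (by norm_num))
    (.of_forall fun z => Continuous.tendsto' (by fun_prop) _ _ (by simp))
  filter_upwards [Iio_mem_nhds (show (0 : ℝ) < 1 / 4 by norm_num)] with c hc
  refine .of_forall fun z => ?_
  rw [norm_of_nonneg (by positivity)]
  gcongr
  exact le_of_lt hc

variable [IsProbabilityMeasure Q]

lemma evidence_mul_estimateEnergy_posteriorLaw (hA : A ≠ 0) (h : A ^ 2 = a ^ 2 + t ^ 2) (y : E) :
    evidence Q a y * estimateEnergy (posteriorLaw Q a y) t =
      ∫ w, evidence Q A ((a / A) • y + (t / A) • w) *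
        ‖posteriorMean Q A ((a / A) • y + (t / A) • w)‖ ^ 2 ∂stdGaussian E := by
  simp_rw [estimateEnergy, ← integral_const_mul, ← mul_assoc,
    evidence_mul_evidence_posteriorLaw hA h, posteriorMean, posteriorLaw_posteriorLaw hA h]

lemma integrable_estimateEnergy_integrand_comp (hQ : MemLp (fun x => x) 2 Q) (hA : A ≠ 0)
    (h : A ^ 2 = a ^ 2 + t ^ 2) :
    Integrable (fun p : E × E => evidence Q A ((a / A) • p.1 + (t / A) • p.2) *
        ‖posteriorMean Q A ((a / A) • p.1 + (t / A) • p.2)‖ ^ 2)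
      ((stdGaussian E).prod (stdGaussian E)) := by
  have h_int := integrable_evidence_mul_norm_posteriorMean_sq hQ A
  rw [← map_smul_add_smul_prod_stdGaussian (a := a / A) (b := t / A) (by field_simp; exact h.symm)]
    at h_int
  exact h_int.comp_measurable (by fun_prop)

lemma integrable_evidence_mul_estimateEnergy_posteriorLaw (hQ : MemLp (fun x => x) 2 Q)
    (hA : A ≠ 0) (h : A ^ 2 = a ^ 2 + t ^ 2) :
    Integrable (fun y => evidence Q a y * estimateEnergy (posteriorLaw Q a y) t)
      (stdGaussian E) := by
  simp_rw [evidence_mul_estimateEnergy_posteriorLaw hA h]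
  exact (integrable_estimateEnergy_integrand_comp hQ hA h).integral_prod_left

lemma integral_evidence_mul_estimateEnergy_posteriorLaw (hQ : MemLp (fun x => x) 2 Q)
    (hA : A ≠ 0) (h : A ^ 2 = a ^ 2 + t ^ 2) :
    ∫ y, evidence Q a y * estimateEnergy (posteriorLaw Q a y) t ∂stdGaussian E =
      estimateEnergy Q A := by
  simp_rw [evidence_mul_estimateEnergy_posteriorLaw hA h]
  rw [← integral_prod _ (integrable_estimateEnergy_integrand_comp hQ hA h), estimateEnergy]
  have h_map := map_smul_add_smul_prod_stdGaussian (E := E) (a := a / A) (b := t / A)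
    (by field_simp; exact h.symm)
  have h_meas := (integrable_evidence_mul_norm_posteriorMean_sq hQ A).aestronglyMeasurable
  rw [← h_map] at h_meas
  conv_rhs => rw [← h_map, integral_map (by fun_prop) h_meas]

lemma integrable_norm_sub_inv_smul_add_pow_four_mul_exp (ha : a ≠ 0) {c : ℝ}
    (hc : c / a ^ 2 < 1 / 2) :
    Integrable (fun p : E × E => ‖p.1 - a⁻¹ • (a • p.1 + p.2)‖ ^ 4 *
      exp (c * ‖p.1 - a⁻¹ • (a • p.1 + p.2)‖ ^ 2)) (Q.prod (stdGaussian E)) := by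
  simp_rw [norm_sub_inv_smul_add_pow_four_mul_exp ha]
  exact ((integrable_norm_pow_four_mul_exp_stdGaussian hc).comp_snd _).const_mul _

lemma integral_norm_sub_inv_smul_add_pow_four_mul_exp (ha : a ≠ 0) (c : ℝ) :
    ∫ p : E × E, ‖p.1 - a⁻¹ • (a • p.1 + p.2)‖ ^ 4 *
        exp (c * ‖p.1 - a⁻¹ • (a • p.1 + p.2)‖ ^ 2) ∂Q.prod (stdGaussian E) =
      1 / a ^ 4 * expFourthMoment E (c / a ^ 2) := by
  simp_rw [norm_sub_inv_smul_add_pow_four_mul_exp ha]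
  rw [integral_const_mul,
    integral_fun_snd (fun z : E => ‖z‖ ^ 4 * exp (c / a ^ 2 * ‖z‖ ^ 2)), probReal_univ, one_smul,
    expFourthMoment]

theorem estimateEnergy_le_add_expFourthMoment (hQ : MemLp (fun x => x) 2 Q)
    (hA : A ≠ 0) (h : A ^ 2 = a ^ 2 + t ^ 2) (ht : 0 < t ^ 2) (hta : 98 * t ^ 2 < a ^ 2) :
    estimateEnergy Q A ≤
      estimateEnergy Q a + t ^ 2 * (1 / a ^ 4 * expFourthMoment E (48 * t ^ 2 / a ^ 2)) := by
  have ha2 : 0 < a ^ 2 := by linarith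
  have ha : a ≠ 0 := pow_ne_zero_iff two_ne_zero |>.1 ha2.ne'
  let F (p : E × E) : ℝ :=
    ‖p.1 - a⁻¹ • p.2‖ ^ 4 * exp (48 * t ^ 2 * ‖p.1 - a⁻¹ • p.2‖ ^ 2)
  have hF : StronglyMeasurable F := Continuous.stronglyMeasurable (by fun_prop)
  have hF_int : Integrable (fun p => F (p.1, a • p.1 + p.2)) (Q.prod (stdGaussian E)) :=
    integrable_norm_sub_inv_smul_add_pow_four_mul_exp ha (by rw [div_lt_iff₀ ha2]; linarith)
  have h_energy := integrable_evidence_mul_norm_posteriorMean_sq hQ a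
  have h_rem := (integrable_evidence_smul_integral_posteriorLaw hF hF_int).const_mul (t ^ 2)
  calc estimateEnergy Q A
      = ∫ y, evidence Q a y * estimateEnergy (posteriorLaw Q a y) t ∂stdGaussian E :=
        (integral_evidence_mul_estimateEnergy_posteriorLaw hQ hA h).symm
    _ ≤ ∫ y, (evidence Q a y * ‖posteriorMean Q a y‖ ^ 2 +
          t ^ 2 * (evidence Q a y • ∫ x, F (x, y) ∂posteriorLaw Q a y)) ∂stdGaussian E := by
        refine integral_mono (integrable_evidence_mul_estimateEnergy_posteriorLaw hQ hA h)
          (h_energy.add h_rem) fun y => ?_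
        have h_le := estimateEnergy_le_add_integral_norm_pow_four (m := posteriorMean Q a y) rfl ht
          (integrable_exp_mul_norm_sub_inv_smul_sq_posteriorLaw (Q := Q) ha
            (show 49 * t ^ 2 ≤ a ^ 2 / 2 by linarith) y)
        refine (mul_le_mul_of_nonneg_left h_le (evidence_pos a y).le).trans_eq ?_
        rw [mul_add, mul_left_comm, smul_eq_mul]
    _ = estimateEnergy Q a + t ^ 2 * ∫ p, F (p.1, a • p.1 + p.2) ∂Q.prod (stdGaussian E) := by
        rw [integral_add h_energy h_rem, integral_const_mul,
          integral_evidence_smul_integral_posteriorLaw hF hF_int, estimateEnergy]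
    _ = _ := by rw [integral_norm_sub_inv_smul_add_pow_four_mul_exp ha]

end Refinement

section Telescoping

variable {f g ψ : ℝ → ℝ} {ρ c : ℝ}

lemma le_add_mul_sub_mul_pow (hρ : 0 < ρ)
    (h : ∀ s > 0, f (s * ρ) ≤ f s + c * (g s - g (s * ρ))) {s : ℝ} (hs : 0 < s) (k : ℕ) :
    f (s * ρ ^ k) ≤ f s + c * (g s - g (s * ρ ^ k)) := by
  induction k with
  | zero => simp
  | succ k ih =>
    rw [pow_succ, ← mul_assoc]
    linarith [h (s * ρ ^ k) (by positivity)]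

lemma tendsto_rpow_inv_nhdsGT_one {r : ℝ} (hr : 1 < r) :
    Tendsto (fun k : ℕ => r ^ ((k + 1 : ℕ) : ℝ)⁻¹) atTop (𝓝[>] 1) := by
  refine tendsto_nhdsWithin_iff.2 ⟨?_, .of_forall fun k => one_lt_rpow hr (by positivity)⟩
  have h : Tendsto (fun k : ℕ => ((k + 1 : ℕ) : ℝ)⁻¹) atTop (𝓝 0) :=
    (tendsto_inv_atTop_nhds_zero_nat (𝕜 := ℝ)).comp (tendsto_add_atTop_nat 1)
  simpa [Function.comp_def] using ((continuousAt_const_rpow (by positivity : r ≠ 0)).tendsto.comp h)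

lemma le_add_mul_sub_of_eventually_nhdsGT_one (hψ : Tendsto ψ (𝓝[>] 1) (𝓝 c))
    (h : ∀ᶠ ρ in 𝓝[>] 1, ∀ s > 0, f (s * ρ) ≤ f s + ψ ρ * (g s - g (s * ρ))) {s s' : ℝ}
    (hs : 0 < s) (hss' : s ≤ s') : f s' ≤ f s + c * (g s - g s') := by
  obtain rfl | hlt := hss'.eq_or_lt
  · simp
  have h_ratio : 1 < s' / s := (one_lt_div hs).2 hlt
  have h_mesh := tendsto_rpow_inv_nhdsGT_one h_ratio
  refine ge_of_tendsto (((hψ.comp h_mesh).mul_const (g s - g s')).const_add (f s)) ?_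
  filter_upwards [h_mesh.eventually h] with k hk
  have h_pow : s * ((s' / s) ^ ((k + 1 : ℕ) : ℝ)⁻¹) ^ (k + 1) = s' := by
    rw [rpow_inv_natCast_pow (by positivity) k.succ_ne_zero, mul_div_cancel₀ _ hs.ne']
  simpa only [h_pow, Function.comp_apply] using le_add_mul_sub_mul_pow (by positivity) hk hs (k + 1)

end Telescoping

section EnergyGrowth

variable {E : Type*} [NormedAddCommGroup E] [InnerProductSpace ℝ E] [FiniteDimensional ℝ E]
  [MeasurableSpace E] [BorelSpace E] {Q : Measure E} [IsProbabilityMeasure Q]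

lemma estimateEnergy_sqrt_mul_le (hQ : MemLp (fun x => x) 2 Q) {s ρ : ℝ} (hs : 0 < s) (hρ : 1 < ρ)
    (hρ' : 98 * (ρ - 1) < 1) :
    estimateEnergy Q √(s * ρ) ≤ estimateEnergy Q √s +
      ρ * expFourthMoment E (48 * (ρ - 1)) * (1 / s - 1 / (s * ρ)) := by
  have hρ0 : 0 < ρ - 1 := sub_pos.2 hρ
  have ha : √s ^ 2 = s := sq_sqrt hs.le
  have ha4 : √s ^ 4 = s ^ 2 := by rw [pow_mul _ 2 2, ha]
  have ht : √(s * (ρ - 1)) ^ 2 = s * (ρ - 1) := sq_sqrt (by positivity)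
  have hA : √(s * ρ) ^ 2 = s * ρ := sq_sqrt (by positivity)
  have h := estimateEnergy_le_add_expFourthMoment (a := √s) (t := √(s * (ρ - 1))) (A := √(s * ρ))
    hQ (by positivity) (by rw [hA, ha, ht]; ring) (by positivity) (by rw [ha, ht]; nlinarith)
  rw [ht, ha, ha4] at h
  convert h using 2
  rw [show 48 * (s * (ρ - 1)) / s = 48 * (ρ - 1) by field_simp]
  field_simp

theorem estimateEnergy_sqrt_le (hQ : MemLp (fun x => x) 2 Q) {s s' : ℝ} (hs : 0 < s)
    (hss' : s ≤ s') :
    estimateEnergy Q √s' ≤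
      estimateEnergy Q √s + finrank ℝ E * (finrank ℝ E + 2) * (1 / s - 1 / s') := by
  refine le_add_mul_sub_of_eventually_nhdsGT_one (f := fun s => estimateEnergy Q √s)
    (g := fun s => 1 / s) (ψ := fun ρ => ρ * expFourthMoment E (48 * (ρ - 1))) ?_ ?_ hs hss'
  · have h_lim : Tendsto (fun ρ : ℝ => 48 * (ρ - 1)) (𝓝 1) (𝓝 0) :=
      Continuous.tendsto' (by fun_prop) _ _ (by simp)
    simpa using ((tendsto_id (x := 𝓝 (1 : ℝ))).mul
      (tendsto_expFourthMoment.comp h_lim)).mono_left nhdsWithin_le_nhds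
  · filter_upwards [self_mem_nhdsWithin,
      mem_nhdsWithin_of_mem_nhds (Iio_mem_nhds (show (1 : ℝ) < 1 + 1 / 98 by norm_num))]
      with ρ hρ hρ' s hs
    exact estimateEnergy_sqrt_mul_le hQ hs hρ (by linarith [Set.mem_Iio.1 hρ'])

end EnergyGrowth

section Estimation

variable {E : Type*} [NormedAddCommGroup E] [InnerProductSpace ℝ E] [FiniteDimensional ℝ E]
  [MeasurableSpace E] [BorelSpace E] {Q : Measure E} [IsProbabilityMeasure Q]
  {G : Type*} [NormedAddCommGroup G] [NormedSpace ℝ G] {t : ℝ}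

lemma integrable_comp_smul_add {f : E → G} (hf : StronglyMeasurable f)
    (hf_int : Integrable (fun y => evidence Q t y • f y) (stdGaussian E)) :
    Integrable (fun p => f (t • p.1 + p.2)) (Q.prod (stdGaussian E)) := by
  have hF : StronglyMeasurable fun p : E × E => f p.2 := hf.comp_measurable measurable_snd
  refine (integrable_exp_logLik_smul_iff hF).1 ((integrable_prod_iff' ?_).2
    ⟨.of_forall fun y => (integrable_exp_logLik t y).smul_const (f y), ?_⟩)
  · exact ((measurable_logLik t).exp.stronglyMeasurable.smul hF).aestronglyMeasurable
  · refine hf_int.norm.congr (.of_forall fun y => ?_)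
    simp only [norm_smul, norm_eq_abs, abs_exp, integral_mul_const]
    rw [abs_of_pos (evidence_pos t y), evidence]

variable {Ω : Type*} [MeasurableSpace Ω] {μ : Measure Ω} {X Z : Ω → E}

lemma integral_comp_prodMk_observation
    (hXZ : MeasurePreserving (fun ω => (X ω, Z ω)) μ (Q.prod (stdGaussian E))) {F : E × E → G}
    (hF : StronglyMeasurable F) (hF_int : Integrable (fun ω => F (X ω, t • X ω + Z ω)) μ) :
    ∫ ω, F (X ω, t • X ω + Z ω) ∂μ =
      ∫ y, evidence Q t y • ∫ x, F (x, y) ∂posteriorLaw Q t y ∂stdGaussian E := by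
  have hF' : AEStronglyMeasurable (fun p : E × E => F (p.1, t • p.1 + p.2))
      (Q.prod (stdGaussian E)) := (hF.comp_measurable (by fun_prop)).aestronglyMeasurable
  rw [integral_evidence_smul_integral_posteriorLaw hF ((hXZ.integrable_comp hF').1 hF_int),
    ← hXZ.map_eq, integral_map hXZ.aemeasurable (hXZ.map_eq.symm ▸ hF')]

lemma integrable_comp_observation
    (hXZ : MeasurePreserving (fun ω => (X ω, Z ω)) μ (Q.prod (stdGaussian E))) {f : E → G}
    (hf : StronglyMeasurable f)
    (hf_int : Integrable (fun y => evidence Q t y • f y) (stdGaussian E)) :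
    Integrable (fun ω => f (t • X ω + Z ω)) μ :=
  hXZ.integrable_comp_of_integrable (integrable_comp_smul_add hf hf_int)

theorem posteriorMean_comp_ae_eq_condExp [IsFiniteMeasure μ]
    (hXZ : MeasurePreserving (fun ω => (X ω, Z ω)) μ (Q.prod (stdGaussian E)))
    (hQ : Integrable (fun x => x) Q) :
    (fun ω => posteriorMean Q t (t • X ω + Z ω)) =ᵐ[μ]
      μ[X | MeasurableSpace.comap (fun ω => t • X ω + Z ω) inferInstance] := by
  let Y (ω : Ω) : E := t • X ω + Z ω
  have hX_int : Integrable X μ := hXZ.integrable_comp_of_integrable (hQ.comp_fst _)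
  have hY : Measurable Y := (hXZ.measurable.fst.const_smul t).add hXZ.measurable.snd
  have h_mean : StronglyMeasurable (posteriorMean Q t) :=
    (measurable_posteriorMean t).stronglyMeasurable
  have h_mean_int : Integrable (fun ω => posteriorMean Q t (Y ω)) μ :=
    integrable_comp_observation hXZ h_mean (integrable_evidence_smul_posteriorMean hQ t)
  refine ae_eq_condExp_of_forall_setIntegral_eq hY.comap_le hX_int
    (fun _ _ _ => h_mean_int.integrableOn) ?_
    (h_mean.comp_measurable (comap_measurable _)).aestronglyMeasurable
  rintro _ ⟨B, hB, rfl⟩ -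
  let F (p : E × E) : E := B.indicator (posteriorMean Q t) p.2
  let F' (p : E × E) : E := B.indicator (fun _ => p.1) p.2
  have hF : StronglyMeasurable F := (h_mean.indicator hB).comp_measurable measurable_snd
  have hF' : StronglyMeasurable F' :=
    measurable_fst.stronglyMeasurable.indicator (measurable_snd hB)
  change ∫ ω in Y ⁻¹' B, _ ∂μ = ∫ ω in Y ⁻¹' B, _ ∂μ
  rw [← integral_indicator (hY hB), ← integral_indicator (hY hB)]
  calc _ = _ := integral_comp_prodMk_observation hXZ hF (h_mean_int.indicator (hY hB))
    _ = ∫ y, evidence Q t y • ∫ x, F' (x, y) ∂posteriorLaw Q t y ∂stdGaussian E := by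
      refine integral_congr_ae (.of_forall fun y => ?_)
      by_cases hy : y ∈ B <;> simp [F, F', hy, posteriorMean]
    _ = _ := (integral_comp_prodMk_observation hXZ hF' (hX_int.indicator (hY hB))).symm

theorem integral_norm_sub_condExp_sq_eq [IsFiniteMeasure μ]
    (hXZ : MeasurePreserving (fun ω => (X ω, Z ω)) μ (Q.prod (stdGaussian E)))
    (hQ : MemLp (fun x => x) 2 Q) (t : ℝ) :
    ∫ ω, ‖X ω - (μ[X | MeasurableSpace.comap (fun ω => t • X ω + Z ω) inferInstance]) ω‖ ^ 2 ∂μ =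
      ∫ x, ‖x‖ ^ 2 ∂Q - estimateEnergy Q t := by
  have hX : MemLp X 2 μ := hQ.comp_measurePreserving (measurePreserving_fst.comp hXZ)
  have h_ae := posteriorMean_comp_ae_eq_condExp hXZ (hQ.integrable one_le_two) (t := t)
  have h_mean : MemLp (fun ω => posteriorMean Q t (t • X ω + Z ω)) 2 μ :=
    (memLp_congr_ae h_ae).2 (hX.condExp one_le_two)
  have h_meas : StronglyMeasurable fun p : E × E => ‖p.1 - posteriorMean Q t p.2‖ ^ 2 :=
    ((measurable_fst.sub ((measurable_posteriorMean t).comp measurable_snd)).norm.pow_const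
      2).stronglyMeasurable
  have h_var (y : E) : ∫ x, ‖x - posteriorMean Q t y‖ ^ 2 ∂posteriorLaw Q t y =
      ∫ x, ‖x‖ ^ 2 ∂posteriorLaw Q t y - ‖posteriorMean Q t y‖ ^ 2 := by
    rw [posteriorMean, eq_sub_iff_add_eq]
    simpa using (integral_norm_sub_sq_eq (memLp_two_posteriorLaw hQ (t := t) (y := y)) 0).symm
  calc _ = ∫ ω, ‖X ω - posteriorMean Q t (t • X ω + Z ω)‖ ^ 2 ∂μ :=
        integral_congr_ae (h_ae.mono fun ω hω => by simp only [hω])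
    _ = ∫ y, evidence Q t y • ∫ x, ‖x - posteriorMean Q t y‖ ^ 2 ∂posteriorLaw Q t y
          ∂stdGaussian E :=
        integral_comp_prodMk_observation hXZ h_meas
          ((hX.sub h_mean).integrable_norm_pow two_ne_zero)
    _ = ∫ x, ‖x‖ ^ 2 ∂Q - estimateEnergy Q t := by
        simp_rw [h_var, smul_eq_mul, mul_sub]
        rw [integral_sub (integrable_evidence_mul_integral_norm_sq hQ t)
          (integrable_evidence_mul_norm_posteriorMean_sq hQ t),
          integral_evidence_mul_integral_norm_sq hQ, estimateEnergy]

end Estimation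

section Mmse

variable {E : Type*} [NormedAddCommGroup E] [InnerProductSpace ℝ E] [FiniteDimensional ℝ E]
  [MeasurableSpace E] [BorelSpace E] {Ω : Type*} [MeasurableSpace Ω] {μ : Measure Ω}

/-- The MMSE, per dimension, of the estimation of `X` from `√snr • X + Z`, for random vectors with
values in a Euclidean space; `mmseV` is its counterpart in coordinates. -/
def mmse (μ : Measure Ω) (X Z : Ω → E) (snr : ℝ) : ℝ :=
  1 / finrank ℝ E *
    ∫ ω, ‖X ω - (μ[X | MeasurableSpace.comap (fun ω => √snr • X ω + Z ω) inferInstance]) ω‖ ^ 2 ∂μ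

theorem dBound_no_power_general [Nontrivial E] [IsProbabilityMeasure μ] {X Z : Ω → E}
    (hX : MemLp X 2 μ) (hX_meas : Measurable X) (hZ : Measurable Z)
    (hZlaw : μ.map Z = stdGaussian E) (hindep : IndepFun X Z μ) {snr snr0 : ℝ} (hsnr : 0 < snr)
    (hle : snr ≤ snr0) :
    mmse μ X Z snr ≤ mmse μ X Z snr0 + (finrank ℝ E + 2) * (1 / snr - 1 / snr0) := by
  have hXZ : MeasurePreserving (fun ω => (X ω, Z ω)) μ ((μ.map X).prod (stdGaussian E)) :=
    ⟨hX_meas.prodMk hZ,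
      by rw [hindep.map_prod_eq_prod_map_map hX_meas.aemeasurable hZ.aemeasurable, hZlaw]⟩
  have : IsProbabilityMeasure (μ.map X) := Measure.isProbabilityMeasure_map hX_meas.aemeasurable
  have hQ : MemLp (fun x => x) 2 (μ.map X) :=
    (memLp_map_measure_iff (by fun_prop) hX_meas.aemeasurable).2 hX
  have h_dim : (0 : ℝ) < finrank ℝ E := by exact_mod_cast finrank_pos
  have h_energy := estimateEnergy_sqrt_le hQ hsnr hle
  simp only [mmse, integral_norm_sub_condExp_sq_eq hXZ hQ, one_div_mul_eq_div]
  rw [div_add' _ _ _ h_dim.ne']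
  gcongr
  linarith

lemma comap_smul_toLp_add_toLp {n : ℕ} (X Z : Ω → Fin n → ℝ) (snr : ℝ) :
    MeasurableSpace.comap (fun ω => √snr • WithLp.toLp 2 (X ω) + WithLp.toLp 2 (Z ω))
      inferInstance = obsSigma X Z snr := by
  have h_obs : (fun ω => √snr • WithLp.toLp 2 (X ω) + WithLp.toLp 2 (Z ω)) =
      MeasurableEquiv.toLp 2 (Fin n → ℝ) ∘ obs X Z snr := by
    ext ω i
    simp [obs]
  rw [h_obs, ← MeasurableSpace.comap_comp, obsSigma]
  congr 1
  exact (MeasurableEquiv.toLp 2 (Fin n → ℝ)).measurableEmbedding.comap_eq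

lemma mmseV_eq_mmse {n : ℕ} {X : Ω → Fin n → ℝ} (hX : Integrable (fun ω => WithLp.toLp 2 (X ω)) μ)
    (Z : Ω → Fin n → ℝ) (snr : ℝ) :
    mmseV μ X Z snr =
      mmse μ (fun ω => WithLp.toLp 2 (X ω)) (fun ω => WithLp.toLp 2 (Z ω)) snr := by
  have h_coord (i : Fin n) :
      (fun ω => (μ[fun ω => WithLp.toLp 2 (X ω) | obsSigma X Z snr]) ω i) =ᵐ[μ]
        μ[fun ω => X ω i | obsSigma X Z snr] :=
    (EuclideanSpace.proj (𝕜 := ℝ) i).comp_condExp_comm hX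
  rw [mmseV, mmse, comap_smul_toLp_add_toLp, finrank_euclideanSpace_fin]
  congr 1
  refine integral_congr_ae ?_
  filter_upwards [ae_all_iff.2 h_coord] with ω hω
  simp [EuclideanSpace.real_norm_sq_eq, ceVec, hω]

lemma memLp_two_toLp {n : ℕ} {X : Ω → Fin n → ℝ} (hX : Measurable X)
    (hX2 : Integrable (fun ω => ∑ i, X ω i ^ 2) μ) :
    MemLp (fun ω => WithLp.toLp 2 (X ω)) 2 μ :=
  (memLp_two_iff_integrable_sq_norm (by fun_prop)).2
    (by simpa only [EuclideanSpace.real_norm_sq_eq] using hX2)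

lemma map_toLp_eq_stdGaussian {n : ℕ} {Z : Ω → Fin n → ℝ} (hZ : Measurable Z)
    (hZlaw : μ.map Z = Measure.pi fun _ => gaussianReal 0 1) :
    μ.map (fun ω => WithLp.toLp 2 (Z ω)) = stdGaussian (EuclideanSpace ℝ (Fin n)) := by
  rw [← map_pi_eq_stdGaussian, ← hZlaw, Measure.map_map (by fun_prop) hZ]
  rfl

end Mmse

/-- **Theorem 1 (D-bound, no power constraint).** For every `n ≥ 1`, every random vector `X`
in `ℝⁿ` with `E[‖X‖²] < ∞`, and all `0 < snr ≤ snr0`,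
`mmse(X, snr) ≤ mmse(X, snr0) + (n+2)·(1/snr − 1/snr0)`. -/
theorem dBound_no_power {Ω : Type*} [MeasurableSpace Ω] (μ : Measure Ω) [IsProbabilityMeasure μ]
    (n : ℕ) (hn : 1 ≤ n) (X Z : Ω → Fin n → ℝ)
    (hX : Measurable X) (hZ : Measurable Z)
    (hZlaw : Measure.map Z μ = Measure.pi fun _ : Fin n => gaussianReal 0 1)
    (hindep : IndepFun X Z μ)
    (hX2 : Integrable (fun ω => ∑ i, (X ω i) ^ 2) μ)
    (snr snr0 : ℝ) (hsnr : 0 < snr) (hle : snr ≤ snr0) :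
    mmseV μ X Z snr ≤ mmseV μ X Z snr0 + ((n : ℝ) + 2) * (1 / snr - 1 / snr0) := by
  have : Nonempty (Fin n) := ⟨⟨0, hn⟩⟩
  have hX_memLp := memLp_two_toLp hX hX2
  simpa only [mmseV_eq_mmse (hX_memLp.integrable one_le_two), finrank_euclideanSpace_fin] using
    dBound_no_power_general hX_memLp (by fun_prop) (by fun_prop) (map_toLp_eq_stdGaussian hZ hZlaw)
      (hindep.comp (by fun_prop) (by fun_prop)) hsnr hle

end
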